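/- There exists a function R : (0,∞) → (0,∞) such that Q^{h,R(h)} converges to Q as h → 0⁺; that is, the family of discrete velocity models on the scaled integer lattices hℤ² is consistent with the two-dimensional Boltzmann collision operator. -/

import Mathlib

/-- The set of lattice points `(x, y) ∈ ℤ²` with `x² + y² = n`. -/
noncomputable def latticeCircle (n : ℕ) : Finset (ℤ × ℤ) :=
  (Finset.Icc (-(n : ℤ)) (n : ℤ) ×ˢ Finset.Icc (-(n : ℤ)) (n : ℤ)).filter
    (fun p => p.1 ^ 2 + p.2 ^ 2 = (n : ℤ))

/-- `r n` is the number of lattice points on the circle of squared radius `n`. -/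
noncomputable def latticeR (n : ℕ) : ℕ := (latticeCircle n).card

/-- The angle `θ_u ∈ [0, 2π)` of a lattice point `u`. -/
noncomputable def latticeTheta (u : ℤ × ℤ) : ℝ :=
  if 0 ≤ Complex.arg ((u.1 : ℂ) + (u.2 : ℂ) * Complex.I)
  then Complex.arg ((u.1 : ℂ) + (u.2 : ℂ) * Complex.I)
  else Complex.arg ((u.1 : ℂ) + (u.2 : ℂ) * Complex.I) + 2 * Real.pi

/-- The exponential sum `S(m, k) = Σ_{u ∈ ℤ², |u|² = m} exp(i k θ_u)`. -/
noncomputable def latticeS (m : ℕ) (k : ℤ) : ℂ :=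
  ∑ u ∈ latticeCircle m, Complex.exp ((k : ℂ) * (latticeTheta u : ℂ) * Complex.I)


/-- The continuous collision value `Q = ∫_{ℝ²} (1/2π) ∫_{-π}^{π} g(w,θ) dθ dw`. -/
noncomputable def Qcont (g : ℝ × ℝ → ℝ → ℝ) : ℝ :=
  ∫ w : ℝ × ℝ, (1 / (2 * Real.pi)) * ∫ θ in (-Real.pi)..Real.pi, g w θ

/-- The truncated lattice discrete-velocity approximation
`Q^{h,R} = h² Σ_{ζ ∈ ℤ², 0 < |hζ| ≤ R} (1/r(|ζ|²)) Σ_{|ζ'| = |ζ|} g(hζ, θ_{ζ'} - θ_ζ)`. -/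
noncomputable def Qdisc (g : ℝ × ℝ → ℝ → ℝ) (h R : ℝ) : ℝ :=
  h ^ 2 *
    ∑ᶠ ζ ∈ {ζ : ℤ × ℤ | ζ ≠ 0 ∧ h ^ 2 * ((ζ.1 : ℝ) ^ 2 + (ζ.2 : ℝ) ^ 2) ≤ R ^ 2},
      (1 / (latticeR (ζ.1 ^ 2 + ζ.2 ^ 2).toNat : ℝ)) *
        ∑ ζ' ∈ latticeCircle (ζ.1 ^ 2 + ζ.2 ^ 2).toNat,
          g (h * (ζ.1 : ℝ), h * (ζ.2 : ℝ)) (latticeTheta ζ' - latticeTheta ζ)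


/-! ### Gaussian integers: second moment of the exponential sums -/

/-- the angular character `(z/|z|)^k` -/
noncomputable def lam (k : ℤ) (z : ℂ) : ℂ := (z / (‖z‖ : ℂ)) ^ k

lemma lam_mul (k : ℤ) (z w : ℂ) : lam k (z * w) = lam k z * lam k w := by
  unfold lam
  rw [← mul_zpow, norm_mul, Complex.ofReal_mul, mul_div_mul_comm]

lemma lam_star (k : ℤ) (z : ℂ) : lam k (starRingEnd ℂ z) = starRingEnd ℂ (lam k z) := by
  unfold lam
  rw [map_zpow₀, map_div₀, Complex.norm_conj, Complex.conj_ofReal]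

lemma norm_lam (k : ℤ) {z : ℂ} (hz : z ≠ 0) : ‖lam k z‖ = 1 := by
  unfold lam
  rw [norm_zpow, norm_div, Complex.norm_real, norm_norm, div_self (norm_ne_zero_iff.mpr hz), one_zpow]

lemma lam_zero {k : ℤ} (hk : k ≠ 0) : lam k 0 = 0 := by
  unfold lam
  simp [zero_zpow k hk]

lemma norm_lam_le {k : ℤ} (hk : k ≠ 0) (z : ℂ) : ‖lam k z‖ ≤ 1 := by
  by_cases hz : z = 0
  · rw [hz, lam_zero hk]; simp
  · exact (norm_lam k hz).le

lemma lam_mul_conj (k : ℤ) {z : ℂ} (hz : z ≠ 0) : lam k z * starRingEnd ℂ (lam k z) = 1 := by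
  rw [Complex.mul_conj, Complex.normSq_eq_norm_sq, norm_lam k hz]; simp

lemma lam_two_mul (k : ℤ) {z : ℂ} (hz : z ≠ 0) : lam (2 * k) z = lam k z * lam k z := by
  unfold lam
  have : z / (‖z‖ : ℂ) ≠ 0 := div_ne_zero hz (by simpa using hz)
  rw [← zpow_add₀ this]; ring_nf

open Classical in
/-- nonzero Gaussian integers of norm at most `N` -/
noncomputable def gball (N : ℕ) : Finset GaussianInt :=
  ((Finset.Icc (-(N : ℤ)) (N : ℤ) ×ˢ Finset.Icc (-(N : ℤ)) (N : ℤ)).image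
    (fun p => (⟨p.1, p.2⟩ : GaussianInt))).filter (fun z => z ≠ 0 ∧ z.norm ≤ N)

lemma gnorm_eq (z : GaussianInt) : z.norm = z.re ^ 2 + z.im ^ 2 := by
  rw [Zsqrtd.norm_def]; ring

lemma abs_le_of_sq_le {a N : ℤ} (h : a ^ 2 ≤ N) : -N ≤ a ∧ a ≤ N := by
  constructor
  · by_contra hc
    push Not at hc
    nlinarith
  · by_contra hc
    push Not at hc
    nlinarith

lemma mem_gball {N : ℕ} {z : GaussianInt} : z ∈ gball N ↔ z ≠ 0 ∧ z.norm ≤ N := by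
  classical
  unfold gball
  rw [Finset.mem_filter, and_iff_right_iff_imp]
  rintro ⟨-, h⟩
  rw [gnorm_eq] at h
  have h1 := abs_le_of_sq_le (show z.re ^ 2 ≤ N by nlinarith [sq_nonneg z.im])
  have h2 := abs_le_of_sq_le (show z.im ^ 2 ≤ N by nlinarith [sq_nonneg z.re])
  rw [Finset.mem_image]
  refine ⟨(z.re, z.im), ?_, rfl⟩
  rw [Finset.mem_product, Finset.mem_Icc, Finset.mem_Icc]
  exact ⟨h1, h2⟩

/-- Gaussian integers of norm `n` (for `n ≥ 1`) -/
noncomputable def gcirc (n : ℕ) : Finset GaussianInt := (gball n).filter (fun z => z.norm = n)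

lemma mem_gcirc {n : ℕ} (hn : 0 < n) {z : GaussianInt} : z ∈ gcirc n ↔ z.norm = n := by
  unfold gcirc
  rw [Finset.mem_filter, mem_gball, and_iff_right_iff_imp]
  intro h
  refine ⟨?_, h.le⟩
  rintro rfl
  simp at h
  omega

lemma mem_latticeCircle {n : ℕ} {p : ℤ × ℤ} : p ∈ latticeCircle n ↔ p.1 ^ 2 + p.2 ^ 2 = (n : ℤ) := by
  unfold latticeCircle
  rw [Finset.mem_filter, and_iff_right_iff_imp]
  intro h
  have h1 := abs_le_of_sq_le (show p.1 ^ 2 ≤ n by nlinarith [sq_nonneg p.2])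
  have h2 := abs_le_of_sq_le (show p.2 ^ 2 ≤ n by nlinarith [sq_nonneg p.1])
  rw [Finset.mem_product, Finset.mem_Icc, Finset.mem_Icc]
  exact ⟨h1, h2⟩

lemma sum_latticeCircle {n : ℕ} (hn : 0 < n) {E : Type*} [AddCommMonoid E] (f : ℤ × ℤ → E) :
    ∑ u ∈ latticeCircle n, f u = ∑ z ∈ gcirc n, f (z.re, z.im) := by
  apply Finset.sum_bij' (fun u _ => (⟨u.1, u.2⟩ : GaussianInt)) (fun z _ => (z.re, z.im))
  · intro u hu
    rw [mem_gcirc hn, gnorm_eq]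
    exact mem_latticeCircle.mp hu
  · intro z hz
    rw [mem_gcirc hn, gnorm_eq] at hz
    exact mem_latticeCircle.mpr hz
  · intro u hu; rfl
  · intro z hz; rfl
  · intro u hu; rfl

lemma exp_theta (u : ℤ × ℤ) (hu : u ≠ 0) (k : ℤ) :
    Complex.exp ((k : ℂ) * (latticeTheta u : ℂ) * Complex.I) = lam k ((u.1 : ℂ) + (u.2 : ℂ) * Complex.I) := by
  set w : ℂ := (u.1 : ℂ) + (u.2 : ℂ) * Complex.I with hw
  have hw0 : w ≠ 0 := by
    intro h
    apply hu
    have h1 := congrArg Complex.re h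
    have h2 := congrArg Complex.im h
    simp [hw] at h1 h2
    exact Prod.ext h1 h2
  have h1 : Complex.exp ((latticeTheta u : ℂ) * Complex.I) = w / (‖w‖ : ℂ) := by
    have h2 : Complex.exp ((Complex.arg w : ℂ) * Complex.I) = w / (‖w‖ : ℂ) := by
      rw [eq_div_iff (by simpa using hw0), mul_comm]
      exact Complex.norm_mul_exp_arg_mul_I w
    unfold latticeTheta
    rw [← hw]
    split_ifs
    · exact h2
    · push_cast
      rw [add_mul, Complex.exp_add, h2, Complex.exp_two_pi_mul_I, mul_one]
  unfold lam
  rw [← h1, ← Complex.exp_int_mul]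
  ring_nf

lemma latticeS_eq {n : ℕ} (hn : 0 < n) (k : ℤ) : latticeS n k = ∑ z ∈ gcirc n, lam k (z : ℂ) := by
  unfold latticeS
  rw [sum_latticeCircle hn]
  apply Finset.sum_congr rfl
  intro z hz
  rw [exp_theta, GaussianInt.toComplex_def]
  intro h
  rw [Prod.mk_eq_zero] at h
  rw [mem_gcirc hn, gnorm_eq, h.1, h.2] at hz
  simp at hz; omega

lemma gnorm_mul (a b : GaussianInt) : (a * b).norm = a.norm * b.norm := Zsqrtd.norm_mul a b

lemma gnorm_star (a : GaussianInt) : (star a).norm = a.norm := by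
  rw [gnorm_eq, gnorm_eq]; simp

lemma gnorm_mul_star (a : GaussianInt) : a * star a = (a.norm : GaussianInt) := by
  rw [Zsqrtd.norm_eq_mul_conj]

lemma gnorm_le_of_dvd {a b : GaussianInt} (hb : b ≠ 0) (h : a ∣ b) : a.norm ≤ b.norm := by
  obtain ⟨c, rfl⟩ := h
  rw [gnorm_mul]
  have h1 : 0 < c.norm := GaussianInt.norm_pos.mpr (by rintro rfl; simp at hb)
  have h2 := GaussianInt.norm_nonneg a
  nlinarith

/-- structure of pairs of Gaussian integers of the same norm -/
lemma pair_structure {ζ ζ' : GaussianInt} (h0 : ζ ≠ 0) (h : ζ.norm = ζ'.norm) :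
    ∃ g x₀ u₀ : GaussianInt, u₀.norm = 1 ∧ g ≠ 0 ∧ x₀ ≠ 0 ∧ ζ = g * x₀ ∧ ζ' = g * (u₀ * star x₀) ∧
      ∀ c, c ∣ ζ → c ∣ ζ' → c ∣ g := by
  classical
  set g := EuclideanDomain.gcd ζ ζ' with hg
  obtain ⟨x₀, hx⟩ := EuclideanDomain.gcd_dvd_left ζ ζ'
  obtain ⟨y₀, hy⟩ := EuclideanDomain.gcd_dvd_right ζ ζ'
  rw [← hg] at hx hy
  have hg0 : g ≠ 0 := by
    intro h; rw [h, zero_mul] at hx; exact h0 hx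
  have hx0 : x₀ ≠ 0 := by
    intro h; rw [h, mul_zero] at hx; exact h0 hx
  have hcop : IsCoprime x₀ y₀ := by
    have hb := EuclideanDomain.gcd_eq_gcd_ab ζ ζ'
    rw [← hg] at hb
    refine ⟨EuclideanDomain.gcdA ζ ζ', EuclideanDomain.gcdB ζ ζ', ?_⟩
    apply mul_left_cancel₀ hg0
    calc _ = (g * x₀) * EuclideanDomain.gcdA ζ ζ' + (g * y₀) * EuclideanDomain.gcdB ζ ζ' := by ring
      _ = g := by rw [← hx, ← hy, ← hb]
      _ = g * 1 := by ring
  have hnorm : x₀.norm = y₀.norm := by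
    have : g.norm * x₀.norm = g.norm * y₀.norm := by
      rw [← gnorm_mul, ← gnorm_mul, ← hx, ← hy, h]
    exact mul_left_cancel₀ (GaussianInt.norm_pos.mpr hg0).ne' this
  have hd : x₀ ∣ star y₀ := by
    apply hcop.dvd_of_dvd_mul_left
    rw [gnorm_mul_star, ← hnorm, ← gnorm_mul_star]
    exact Dvd.intro _ rfl
  obtain ⟨w, hw⟩ := hd
  have hwn : w.norm = 1 := by
    have : x₀.norm * w.norm = x₀.norm * 1 := by
      rw [← gnorm_mul, ← hw, gnorm_star, hnorm, mul_one]
    exact mul_left_cancel₀ (GaussianInt.norm_pos.mpr hx0).ne' this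
  refine ⟨g, x₀, star w, by rw [gnorm_star, hwn], hg0, hx0, hx, ?_, ?_⟩
  · rw [hy]
    congr 1
    rw [← star_star y₀, hw, star_mul]
  · intro c h1 h2
    exact EuclideanDomain.dvd_gcd h1 h2

open Classical in
lemma fiber_card {n : ℕ} (hn : 0 < n) {ζ ζ' : GaussianInt} (h1 : ζ.norm = n) (h2 : ζ'.norm = n) :
    ((gball n ×ˢ (gball n ×ˢ gcirc 1)).filter
      (fun t => t.1 * t.2.1 = ζ ∧ t.2.2 * t.1 * star t.2.1 = ζ')).card =
    ((gball n).filter (fun δ => (∃ v : GaussianInt, star δ * v = δ ∧ v.norm = 1) ∧ δ ∣ ζ ∧ δ ∣ ζ')).card := by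
  have hζ : ζ ≠ 0 := by rintro rfl; simp at h1; omega
  have hζ' : ζ' ≠ 0 := by rintro rfl; simp at h2; omega
  obtain ⟨g, x₀, u₀, hu₀, hg0, hx0, hx, hy, hdvd⟩ := pair_structure hζ (h1.trans h2.symm)
  have hunit : ∀ u : GaussianInt, u.norm = 1 → u * star u = 1 := by
    intro u hu; rw [gnorm_mul_star, hu]; simp
  have hstar0 : ∀ {a : GaussianInt}, a ≠ 0 → star a ≠ 0 := by
    intro a ha h; apply ha; rw [← star_star a, h, star_zero]
  -- basic facts on elements of the fibre
  have facts : ∀ t : GaussianInt × GaussianInt × GaussianInt,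
      t.1 * t.2.1 = ζ → t.2.2 * t.1 * star t.2.1 = ζ' → ∃ δ, g = t.1 * δ ∧ t.2.1 = δ * x₀ ∧
        t.2.2 * star δ = δ * u₀ := by
    rintro ⟨c, x, u⟩ e1 e2
    simp only at e1 e2 ⊢
    obtain ⟨δ, hδ⟩ := hdvd c (Dvd.intro _ e1) (by rw [← e2]; exact Dvd.intro_left u (by ring) |>.trans (Dvd.intro (star x) rfl))
    have hc0 : c ≠ 0 := by rintro rfl; simp at hδ; exact hg0 hδ
    have hxx : x = δ * x₀ := by
      apply mul_left_cancel₀ hc0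
      rw [e1, hx, hδ]; ring
    refine ⟨δ, hδ, hxx, ?_⟩
    apply mul_left_cancel₀ hc0
    apply mul_right_cancel₀ (hstar0 hx0)
    rw [hy, hδ, hxx, star_mul] at e2
    calc _ = u * c * (star x₀ * star δ) := by ring
      _ = _ := by rw [e2]; ring
  apply Finset.card_bij (fun t _ => g / t.1)
  · rintro ⟨c, x, u⟩ ht
    rw [Finset.mem_filter, Finset.mem_product, Finset.mem_product] at ht
    obtain ⟨⟨hc, hxb, hu⟩, e1, e2⟩ := ht
    obtain ⟨δ, hδ, hxx, huδ⟩ := facts ⟨c, x, u⟩ e1 e2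
    simp only at hδ hxx huδ hu hc ⊢
    rw [mem_gcirc one_pos] at hu
    rw [mem_gball] at hc
    have hdiv : g / c = δ := by rw [hδ]; exact mul_div_cancel_left₀ δ hc.1
    rw [hdiv, Finset.mem_filter, mem_gball]
    have hδg : δ ∣ g := Dvd.intro_left c hδ.symm
    have hδζ : δ ∣ ζ := hδg.trans (Dvd.intro _ hx.symm)
    refine ⟨⟨?_, ?_⟩, ⟨u * star u₀, ?_, ?_⟩, hδζ, hδg.trans (Dvd.intro _ hy.symm)⟩
    · rintro rfl; simp at hδ; exact hg0 hδ
    · rw [← h1]; exact gnorm_le_of_dvd hζ hδζ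
    · calc star δ * (u * star u₀) = (u * star δ) * star u₀ := by ring
        _ = δ * (u₀ * star u₀) := by rw [huδ]; ring
        _ = δ := by rw [hunit u₀ hu₀, mul_one]
    · rw [gnorm_mul, gnorm_star, hu₀, hu]; simp
  · rintro ⟨c, x, u⟩ ht ⟨c', x', u'⟩ ht' heq
    rw [Finset.mem_filter, Finset.mem_product, Finset.mem_product] at ht ht'
    obtain ⟨⟨hc, hxb, hu⟩, e1, e2⟩ := ht
    obtain ⟨⟨hc', hxb', hu'⟩, e1', e2'⟩ := ht'
    obtain ⟨δ, hδ, hxx, huδ⟩ := facts ⟨c, x, u⟩ e1 e2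
    obtain ⟨δ', hδ', hxx', huδ'⟩ := facts ⟨c', x', u'⟩ e1' e2'
    simp only at hδ hxx huδ hc hδ' hxx' huδ' hc' heq
    rw [mem_gball] at hc hc'
    have hdiv : g / c = δ := by rw [hδ]; exact mul_div_cancel_left₀ δ hc.1
    have hdiv' : g / c' = δ' := by rw [hδ']; exact mul_div_cancel_left₀ δ' hc'.1
    have hδδ : δ = δ' := by rw [← hdiv, ← hdiv', heq]
    subst hδδ
    have hδ0 : δ ≠ 0 := by rintro rfl; simp at hδ; exact hg0 hδ
    have hcc : c = c' := mul_right_cancel₀ hδ0 (hδ.symm.trans hδ')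
    have huu : u = u' := mul_right_cancel₀ (hstar0 hδ0) (huδ.trans huδ'.symm)
    rw [hcc, huu, hxx, hxx']
  · intro δ hδ
    rw [Finset.mem_filter, mem_gball] at hδ
    obtain ⟨⟨hδ0, -⟩, ⟨v, hv, hvn⟩, hd1, hd2⟩ := hδ
    obtain ⟨c, hc⟩ := hdvd δ hd1 hd2
    have hc0 : c ≠ 0 := by rintro rfl; simp at hc; exact hg0 hc
    have hcx : c * (δ * x₀) = ζ := by rw [hx, hc]; ring
    refine ⟨(c, δ * x₀, u₀ * v), ?_, ?_⟩
    · rw [Finset.mem_filter, Finset.mem_product, Finset.mem_product]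
      simp only [mem_gball, mem_gcirc one_pos]
      refine ⟨⟨⟨hc0, ?_⟩, ⟨mul_ne_zero hδ0 hx0, ?_⟩, ?_⟩, hcx, ?_⟩
      · rw [← h1]; exact gnorm_le_of_dvd hζ (Dvd.intro _ hcx)
      · rw [← h1]; exact gnorm_le_of_dvd hζ (Dvd.intro_left _ hcx)
      · rw [gnorm_mul, hu₀, hvn]; simp
      · rw [star_mul, hy, hc]
        calc _ = (star δ * v) * c * u₀ * star x₀ := by ring
          _ = _ := by rw [hv]; ring
    · simp only
      rw [hc]; exact mul_div_cancel_right₀ δ hc0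

/-- divisor-type sum dominating the square of the exponential sum -/
noncomputable def gV (n : ℕ) (k : ℤ) : ℂ :=
  ∑ c ∈ gball n, ∑ x ∈ gball n, if c.norm * x.norm = n then lam k (x : ℂ) else 0

open Classical in
lemma key_identity {n : ℕ} (hn : 0 < n) (k : ℤ) (hk : ∀ u : GaussianInt, u.norm = 1 → lam k (u : ℂ) = 1) :
    ((gcirc 1).card : ℂ) * gV n (2 * k) =
      ∑ δ ∈ (gball n).filter (fun δ => ∃ v : GaussianInt, star δ * v = δ ∧ v.norm = 1),
        ((‖∑ ζ ∈ (gcirc n).filter (fun ζ => δ ∣ ζ), lam k (ζ : ℂ)‖ ^ 2 : ℝ) : ℂ) := by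
  set T := (gball n ×ˢ (gball n ×ˢ gcirc 1)).filter (fun t => t.1.norm * t.2.1.norm = (n:ℤ)) with hT
  set Φ : GaussianInt × GaussianInt × GaussianInt → GaussianInt × GaussianInt :=
    fun t => (t.1 * t.2.1, t.2.2 * t.1 * star t.2.1) with hΦ
  set W : GaussianInt × GaussianInt → ℂ := fun p => lam k (p.1 : ℂ) * starRingEnd ℂ (lam k (p.2 : ℂ)) with hW
  have step1 : ((gcirc 1).card : ℂ) * gV n (2 * k) = ∑ t ∈ T, W (Φ t) := by
    have : ∑ t ∈ T, W (Φ t) = ∑ t ∈ T, lam (2*k) (t.2.1 : ℂ) := by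
      apply Finset.sum_congr rfl
      rintro ⟨c, x, u⟩ ht
      rw [hT, Finset.mem_filter, Finset.mem_product, Finset.mem_product] at ht
      simp only [mem_gball, mem_gcirc one_pos] at ht
      obtain ⟨⟨⟨hc, -⟩, ⟨hx, -⟩, hu⟩, -⟩ := ht
      have hc' : (c : ℂ) ≠ 0 := by simpa using hc
      have hx' : (x : ℂ) ≠ 0 := by simpa using hx
      simp only [hW, hΦ]
      have hu1 : lam k (u : ℂ) = 1 := hk u (by simpa using hu)
      rw [GaussianInt.toComplex_mul, GaussianInt.toComplex_mul, GaussianInt.toComplex_mul,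
        GaussianInt.toComplex_star, lam_mul, lam_mul, lam_mul, lam_star, map_mul, map_mul, hu1, map_one,
        Complex.conj_conj, lam_two_mul k hx']
      have := lam_mul_conj k hc'
      linear_combination (lam k (x:ℂ) * lam k (x:ℂ)) * this
    rw [this, hT, Finset.sum_filter, Finset.sum_product, gV, Finset.mul_sum]
    apply Finset.sum_congr rfl
    intro c _
    rw [Finset.sum_product, Finset.mul_sum]
    apply Finset.sum_congr rfl
    intro x _
    simp
  have hmaps : ∀ t ∈ T, Φ t ∈ gcirc n ×ˢ gcirc n := by
    rintro ⟨c, x, u⟩ ht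
    rw [hT, Finset.mem_filter, Finset.mem_product, Finset.mem_product] at ht
    obtain ⟨⟨-, -, hu⟩, he⟩ := ht
    simp only [mem_gcirc one_pos] at hu he
    simp only [hΦ, Finset.mem_product, mem_gcirc hn, gnorm_mul, gnorm_star]
    rw [hu]
    refine ⟨he, ?_⟩
    rw [← he]; simp
  have hfib : ∀ p ∈ gcirc n ×ˢ gcirc n, ((T.filter (fun t => Φ t = p)).card : ℂ) =
      ∑ δ ∈ (gball n).filter (fun δ => ∃ v : GaussianInt, star δ * v = δ ∧ v.norm = 1),
        if δ ∣ p.1 ∧ δ ∣ p.2 then (1:ℂ) else 0 := by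
    rintro ⟨ζ, ζ'⟩ hp
    simp only [Finset.mem_product, mem_gcirc hn] at hp
    have h1 := fiber_card hn hp.1 hp.2
    have h2 : T.filter (fun t => Φ t = (ζ, ζ')) = (gball n ×ˢ (gball n ×ˢ gcirc 1)).filter
      (fun t => t.1 * t.2.1 = ζ ∧ t.2.2 * t.1 * star t.2.1 = ζ') := by
      rw [hT, Finset.filter_filter]
      apply Finset.filter_congr
      rintro ⟨c, x, u⟩ _
      simp only [hΦ, Prod.mk.injEq]
      constructor
      · exact fun h => h.2
      · intro h
        refine ⟨?_, h⟩
        rw [← gnorm_mul, h.1, hp.1]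
    rw [h2, h1, ← Finset.sum_filter, Finset.filter_filter]
    simp
  rw [step1, ← Finset.sum_fiberwise_of_maps_to hmaps]
  have step2 : ∀ p ∈ gcirc n ×ˢ gcirc n, ∑ t ∈ T.filter (fun t => Φ t = p), W (Φ t)
      = ∑ δ ∈ (gball n).filter (fun δ => ∃ v : GaussianInt, star δ * v = δ ∧ v.norm = 1),
        if δ ∣ p.1 ∧ δ ∣ p.2 then W p else 0 := by
    intro p hp
    have : ∑ t ∈ T.filter (fun t => Φ t = p), W (Φ t) = ∑ t ∈ T.filter (fun t => Φ t = p), W p := by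
      apply Finset.sum_congr rfl
      intro t ht
      rw [(Finset.mem_filter.mp ht).2]
    rw [this, Finset.sum_const, nsmul_eq_mul, hfib p hp, Finset.sum_mul]
    apply Finset.sum_congr rfl
    intro δ _
    split_ifs <;> simp
  rw [Finset.sum_congr rfl step2, Finset.sum_comm]
  apply Finset.sum_congr rfl
  intro δ _
  rw [← Complex.normSq_eq_norm_sq, ← Complex.mul_conj, map_sum, Finset.sum_mul_sum, ← Finset.sum_product',
    ← Finset.sum_filter]
  apply Finset.sum_congr
  · ext ⟨a, b⟩
    simp only [Finset.mem_filter, Finset.mem_product]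
    tauto
  · intro p _
    rfl

lemma S_sq_le {n : ℕ} (hn : 0 < n) (k : ℤ) (hk : ∀ u : GaussianInt, u.norm = 1 → lam k (u : ℂ) = 1) :
    ‖latticeS n k‖ ^ 2 ≤ (gcirc 1).card * (gV n (2 * k)).re := by
  classical
  have h := congrArg Complex.re (key_identity hn k hk)
  rw [← Complex.ofReal_sum, Complex.ofReal_re] at h
  have h2 : (((gcirc 1).card : ℂ) * gV n (2 * k)).re = (gcirc 1).card * (gV n (2 * k)).re := by
    rw [← Complex.ofReal_natCast, Complex.re_ofReal_mul]
  rw [← h2, h, latticeS_eq hn]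
  have h1 : (1 : GaussianInt) ∈ (gball n).filter (fun δ => ∃ v : GaussianInt, star δ * v = δ ∧ v.norm = 1) := by
    rw [Finset.mem_filter, mem_gball]
    refine ⟨⟨one_ne_zero, ?_⟩, 1, by simp, by simp⟩
    simp; omega
  refine le_trans ?_ (Finset.single_le_sum (fun δ _ => by positivity) h1)
  have : (gcirc n).filter (fun ζ => (1 : GaussianInt) ∣ ζ) = gcirc n := by
    apply Finset.filter_true_of_mem
    intro z _
    exact one_dvd z
  rw [this]

/-- if the character is nontrivial on units, the exponential sum vanishes -/
lemma S_eq_zero {n : ℕ} (hn : 0 < n) (k : ℤ) {u : GaussianInt} (hu : u.norm = 1) (hk : lam k (u : ℂ) ≠ 1) :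
    latticeS n k = 0 := by
  have hunit : u * star u = 1 := by rw [gnorm_mul_star, hu]; simp
  have h : latticeS n k = lam k (u : ℂ) * latticeS n k := by
    rw [latticeS_eq hn, Finset.mul_sum]
    apply Finset.sum_bij' (fun z _ => star u * z) (fun z _ => u * z)
    · intro z hz
      rw [mem_gcirc hn] at hz ⊢
      rw [gnorm_mul, gnorm_star, hu, hz]; simp
    · intro z hz
      rw [mem_gcirc hn] at hz ⊢
      rw [gnorm_mul, hu, hz]; simp
    · intro z _
      rw [← mul_assoc, hunit, one_mul]
    · intro z _
      rw [← mul_assoc, mul_comm (star u), hunit, one_mul]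
    · intro z _
      rw [← lam_mul, ← GaussianInt.toComplex_mul, ← mul_assoc, hunit, one_mul]
  have h2 : (1 - lam k (u : ℂ)) * latticeS n k = 0 := by
    rw [sub_mul, one_mul, ← h, sub_self]
  rcases mul_eq_zero.mp h2 with h3 | h3
  · exact absurd (sub_eq_zero.mp h3).symm hk
  · exact h3

/-! ### Density zero of sums of two squares -/

lemma exp_telescope (y : ℝ) : y * Real.exp (-y) ≤ 2 * (Real.exp (-(y / 2)) - Real.exp (-y)) := by
  have h1 : Real.exp (-(y/2)) = Real.exp (-y) * Real.exp (y/2) := by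
    rw [← Real.exp_add]; ring_nf
  have h2 := Real.add_one_le_exp (y/2)
  have h3 := Real.exp_pos (-y)
  rw [h1]
  nlinarith [mul_le_mul_of_nonneg_left h2 h3.le]

lemma exp_telescope_sum (L : ℝ) (J : ℕ) :
    ∑ j ∈ Finset.range J, (L * (1/2)^j) * Real.exp (-(L * (1/2)^j)) ≤ 2 := by
  have h : ∑ j ∈ Finset.range J, (L * (1/2)^j) * Real.exp (-(L * (1/2)^j))
      ≤ 2 * (Real.exp (-(L * (1/2)^J)) - Real.exp (-(L * (1/2)^0))) := by
    rw [← Finset.sum_range_sub (fun j => Real.exp (-(L * (1/2)^j))), Finset.mul_sum]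
    apply Finset.sum_le_sum
    intro j _
    have := exp_telescope (L * (1/2)^j)
    rw [show L * (1/2)^(j+1) = L * (1/2)^j / 2 by ring]
    exact this
  by_cases hL : 0 ≤ L
  · have h1 : Real.exp (-(L * (1/2)^J)) ≤ 1 := Real.exp_le_one_iff.mpr (by
      have : 0 ≤ L * (1/2:ℝ)^J := by positivity
      linarith)
    have := Real.exp_pos (-(L * (1/2)^0))
    linarith
  · have : ∑ j ∈ Finset.range J, (L * (1/2)^j) * Real.exp (-(L * (1/2)^j)) ≤ 0 := by
      apply Finset.sum_nonpos
      intro j _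
      apply mul_nonpos_of_nonpos_of_nonneg
      · apply mul_nonpos_of_nonpos_of_nonneg (by linarith) (by positivity)
      · positivity
    linarith

open ArithmeticFunction.vonMangoldt in
lemma not_summable_inv_three_mod_four :
    ¬ Summable (fun n : ℕ => if n.Prime ∧ n % 4 = 3 then (1 / n : ℝ) else 0) := by
  intro H
  have ha : IsUnit (3 : ZMod 4) := by decide
  obtain ⟨C, hC⟩ := LSeries_residueClass_lower_bound (q := 4) ha
  have hnp := summable_residueClass_non_primes_div (q := 4) (3 : ZMod 4)
  set np : ℕ → ℝ := fun n => (if n.Prime then 0 else residueClass (3 : ZMod 4) n) / n with hnpdef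
  have hnp0 : ∀ n, 0 ≤ np n := by
    intro n
    simp only [hnpdef]
    split_ifs
    · simp
    · exact div_nonneg (residueClass_nonneg _ _) (Nat.cast_nonneg _)
  set pr : ℕ → ℝ := fun n : ℕ => if n.Prime ∧ n % 4 = 3 then (1 / n : ℝ) else 0 with hprdef
  have hpr0 : ∀ n, 0 ≤ pr n := by
    intro n
    simp only [hprdef]
    split_ifs
    · positivity
    · exact le_rfl
  -- pointwise bound
  have hterm : ∀ n : ℕ, ∀ x : ℝ, 1 < x →
      residueClass (3 : ZMod 4) n / (n:ℝ)^x ≤ np n + pr n * (Real.log n * Real.exp (-(Real.log n * (x-1)))) := by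
    intro n x hx
    rcases Nat.eq_zero_or_pos n with rfl | hn
    · simp [hnpdef, hprdef]
    have hn1 : (1:ℝ) ≤ n := by exact_mod_cast hn
    have hpow : (n:ℝ) ≤ (n:ℝ)^x := by
      conv_lhs => rw [← Real.rpow_one n]
      exact Real.rpow_le_rpow_of_exponent_le hn1 hx.le
    by_cases hp : n.Prime
    · by_cases h3 : n % 4 = 3
      · have e1 : np n = 0 := by simp [hnpdef, hp]
        have e2 : pr n = 1 / n := by simp [hprdef, hp, h3]
        have e3 : residueClass (3 : ZMod 4) n ≤ Real.log n := by
          refine (residueClass_le _ _).trans ?_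
          rw [ArithmeticFunction.vonMangoldt_apply_prime hp]
        have e4 : (n:ℝ)^x = n * Real.exp (Real.log n * (x-1)) := by
          rw [Real.rpow_def_of_pos (by linarith)]
          conv_rhs => rw [← Real.exp_log (show (0:ℝ) < n by linarith)]
          rw [Real.log_exp, ← Real.exp_add]; ring_nf
        rw [e1, e2, e4, Real.exp_neg, zero_add]
        calc residueClass (3 : ZMod 4) n / (n * Real.exp (Real.log n * (x-1)))
            ≤ Real.log n / (n * Real.exp (Real.log n * (x-1))) := by gcongr
          _ = _ := by field_simp
      · have e3 : residueClass (3 : ZMod 4) n = 0 := by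
          simp only [residueClass]
          rw [Set.indicator_of_notMem]
          intro hmem
          apply h3
          have : (n : ZMod 4) = ((3:ℕ) : ZMod 4) := hmem
          rw [ZMod.natCast_eq_natCast_iff] at this
          exact this
        have e1 : np n = 0 := by simp [hnpdef, hp]
        have e2 : pr n = 0 := by simp [hprdef, h3]
        rw [e1, e2, e3]; simp
    · have e1 : np n = residueClass (3 : ZMod 4) n / n := by simp [hnpdef, hp]
      have e2 : pr n = 0 := by simp [hprdef, hp]
      rw [e1, e2, zero_mul, add_zero]
      exact div_le_div_of_nonneg_left (residueClass_nonneg _ _) (by linarith) hpow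
  -- choose J
  set A := ∑' n, np n with hA
  set B := ∑' n, pr n with hB
  have hA0 : 0 ≤ A := tsum_nonneg hnp0
  have key : ∀ J : ℕ, ∑ j ∈ Finset.range J, (1/2:ℝ)^j * ((1/2)/((1/2:ℝ)^j) - C) ≤ 2 * A + 2 * B := by
    intro J
    have hx : ∀ j : ℕ, (1 + (1/2:ℝ)^j) ∈ Set.Ioc (1:ℝ) 2 := by
      intro j
      refine ⟨by have : (0:ℝ) < (1/2)^j := by positivity
                 linarith, ?_⟩
      have : (1/2:ℝ)^j ≤ 1 := pow_le_one₀ (by norm_num) (by norm_num)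
      linarith
    have hs : ∀ j : ℕ, Summable (fun n => np n + pr n * (Real.log n * Real.exp (-(Real.log n * ((1/2:ℝ)^j))))) := by
      intro j
      apply hnp.add
      have : ∀ n:ℕ, ‖pr n * (Real.log n * Real.exp (-(Real.log n * ((1/2:ℝ)^j))))‖ ≤ pr n * (2 * 2^j) := by
        intro n
        have hl : 0 ≤ Real.log n := Real.log_natCast_nonneg n
        rw [Real.norm_of_nonneg (mul_nonneg (hpr0 n) (by positivity))]
        apply mul_le_mul_of_nonneg_left _ (hpr0 n)
        have h1 := exp_telescope (Real.log n * ((1/2:ℝ)^j))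
        have h2 : Real.exp (-(Real.log n * ((1/2:ℝ)^j)/2)) ≤ 1 := Real.exp_le_one_iff.mpr (by
          have : 0 ≤ Real.log n * ((1/2:ℝ)^j)/2 := by positivity
          linarith)
        have h3 := Real.exp_pos (-(Real.log n * ((1/2:ℝ)^j)))
        have h4 : Real.log n * (1/2:ℝ)^j * Real.exp (-(Real.log n * ((1/2:ℝ)^j))) ≤ 2 := by linarith
        have h5 : (1/2:ℝ)^j * 2^j = 1 := by rw [← mul_pow]; norm_num
        calc _ = (Real.log n * (1/2:ℝ)^j * Real.exp (-(Real.log n * ((1/2:ℝ)^j)))) * 2^j := by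
              linear_combination (-(Real.log n * Real.exp (-(Real.log n * ((1/2:ℝ)^j))))) * h5
          _ ≤ 2 * 2^j := by gcongr
      exact Summable.of_norm_bounded (H.mul_right _) this
    have hup : ∀ j : ℕ, (1/2)/((1/2:ℝ)^j) - C ≤ ∑' n, (np n + pr n * (Real.log n * Real.exp (-(Real.log n * ((1/2:ℝ)^j))))) := by
      intro j
      have h1 := hC (hx j)
      have ht : (((4:ℕ).totient : ℝ))⁻¹ = 1/2 := by
        have : (4:ℕ).totient = 2 := by decide
        rw [this]; norm_num
      rw [ht, add_sub_cancel_left] at h1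
      refine h1.trans ?_
      have hle : ∀ n : ℕ, residueClass (3 : ZMod 4) n / (n:ℝ)^(1 + (1/2:ℝ)^j) ≤ np n + pr n * (Real.log n * Real.exp (-(Real.log n * ((1/2:ℝ)^j)))) := by
        intro n
        have := hterm n _ (hx j).1
        rwa [add_sub_cancel_left] at this
      refine Summable.tsum_le_tsum hle ?_ (hs j)
      refine Summable.of_nonneg_of_le (fun n => div_nonneg (residueClass_nonneg _ _) (by positivity)) hle (hs j)
    have hs2 : ∀ j : ℕ, Summable (fun n => (1/2:ℝ)^j * (np n + pr n * (Real.log n * Real.exp (-(Real.log n * ((1/2:ℝ)^j)))))) :=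
      fun j => (hs j).mul_left _
    calc _ ≤ ∑ j ∈ Finset.range J, (1/2:ℝ)^j * ∑' n, (np n + pr n * (Real.log n * Real.exp (-(Real.log n * ((1/2:ℝ)^j))))) := by
          apply Finset.sum_le_sum
          intro j _
          exact mul_le_mul_of_nonneg_left (hup j) (by positivity)
      _ = ∑' n, ∑ j ∈ Finset.range J, (1/2:ℝ)^j * (np n + pr n * (Real.log n * Real.exp (-(Real.log n * ((1/2:ℝ)^j))))) := by
          rw [Summable.tsum_finsetSum (fun j _ => hs2 j)]
          apply Finset.sum_congr rfl
          intro j _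
          rw [tsum_mul_left]
      _ ≤ ∑' n, (2 * np n + 2 * pr n) := by
          refine Summable.tsum_le_tsum ?_ (summable_sum (fun j _ => hs2 j)) ((hnp.mul_left 2).add (H.mul_left 2))
          intro n
          simp only [mul_add]
          rw [Finset.sum_add_distrib, ← Finset.sum_mul]
          apply add_le_add
          · apply mul_le_mul_of_nonneg_right _ (hnp0 n)
            have := Summable.sum_le_tsum (Finset.range J) (fun j _ => by positivity) (summable_geometric_two)
            rwa [tsum_geometric_two] at this
          · have : ∑ j ∈ Finset.range J, (1/2:ℝ)^j * (pr n * (Real.log n * Real.exp (-(Real.log n * ((1/2:ℝ)^j)))))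
              = (∑ j ∈ Finset.range J, (Real.log n * (1/2)^j) * Real.exp (-(Real.log n * (1/2)^j))) * pr n := by
              rw [Finset.sum_mul]
              apply Finset.sum_congr rfl
              intro j _
              ring
            rw [this]
            exact mul_le_mul_of_nonneg_right (exp_telescope_sum _ _) (hpr0 n)
      _ = 2 * A + 2 * B := by
          rw [Summable.tsum_add (hnp.mul_left 2) (H.mul_left 2), tsum_mul_left, tsum_mul_left]
  have key2 : ∀ J : ℕ, (J:ℝ)/2 ≤ 2*A + 2*B + 2 * |C| := by
    intro J
    have h1 := key J
    have h2 : ∑ j ∈ Finset.range J, (1/2:ℝ)^j * ((1/2)/((1/2:ℝ)^j) - C)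
        = (J:ℝ)/2 - (∑ j ∈ Finset.range J, (1/2:ℝ)^j) * C := by
      have : ∀ j ∈ Finset.range J, (1/2:ℝ)^j * ((1/2)/((1/2:ℝ)^j) - C) = 1/2 - (1/2:ℝ)^j * C := by
        intro j _
        have : (1/2:ℝ)^j ≠ 0 := by positivity
        field_simp
      rw [Finset.sum_congr rfl this, Finset.sum_sub_distrib, ← Finset.sum_mul]
      simp; ring
    have h3 : (∑ j ∈ Finset.range J, (1/2:ℝ)^j) ≤ 2 := by
      have := Summable.sum_le_tsum (Finset.range J) (fun j _ => by positivity) (summable_geometric_two)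
      rwa [tsum_geometric_two] at this
    have h4 : 0 ≤ (∑ j ∈ Finset.range J, (1/2:ℝ)^j) := by positivity
    have h5 : (∑ j ∈ Finset.range J, (1/2:ℝ)^j) * C ≤ 2 * |C| := by
      calc _ ≤ (∑ j ∈ Finset.range J, (1/2:ℝ)^j) * |C| := by gcongr; exact le_abs_self C
        _ ≤ 2 * |C| := by gcongr
    linarith
  obtain ⟨J, hJ⟩ := exists_nat_gt (2 * (2*A + 2*B + 2 * |C|))
  have := key2 J
  linarith

/-- `p` exactly divides `n` -/
def ExactDvd (p n : ℕ) : Prop := p ∣ n ∧ ¬ p ^ 2 ∣ n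

lemma exactDvd_mod {p M n : ℕ} (h : p ^ 2 ∣ M) : ExactDvd p (n % M) ↔ ExactDvd p n := by
  unfold ExactDvd
  rw [Nat.dvd_mod_iff h, Nat.dvd_mod_iff ((Dvd.intro_left (p) (by ring)).trans h : p ∣ M)]

open Classical in
lemma card_one (p : ℕ) (hp : 1 < p) :
    (((Finset.range (p^2)).filter (fun n => ¬ ExactDvd p n)).card : ℝ) ≤ p^2 - (p - 1) := by
  have h1 : p - 1 ≤ ((Finset.range (p^2)).filter (fun n => ExactDvd p n)).card := by
    have : (Finset.Ico 1 p).card = p - 1 := by simp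
    rw [← this]
    apply Finset.card_le_card_of_injOn (fun i => p * i)
    · intro i hi
      simp only [Finset.coe_Ico, Set.mem_Ico] at hi
      simp only [Finset.coe_filter, Finset.mem_range, Set.mem_ofPred_eq]
      refine ⟨by rw [pow_two]; exact Nat.mul_lt_mul_of_pos_left hi.2 (by omega), Dvd.intro _ rfl, ?_⟩
      intro hd
      rw [pow_two] at hd
      have := Nat.dvd_of_mul_dvd_mul_left (by omega) hd
      have := Nat.le_of_dvd (by omega) this
      omega
    · intro i _ j _ hij
      exact Nat.eq_of_mul_eq_mul_left (by omega) hij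
  have h2 := Finset.card_filter_add_card_filter_not (s := Finset.range (p^2)) (fun n => ExactDvd p n)
  rw [Finset.card_range] at h2
  have h3 : ((p - 1 : ℕ) : ℝ) = p - 1 := by
    rw [Nat.cast_sub (by omega)]; simp
  have h4 : ((p - 1 : ℕ) : ℝ) ≤ (((Finset.range (p^2)).filter (fun n => ExactDvd p n)).card : ℝ) := by
    exact_mod_cast h1
  have h5 : ((((Finset.range (p^2)).filter (fun n => ExactDvd p n)).card : ℝ)) + (((Finset.range (p^2)).filter (fun n => ¬ ExactDvd p n)).card : ℝ) = p^2 := by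
    exact_mod_cast h2
  linarith

open Classical in
lemma card_period (P : Finset ℕ) (hP : ∀ p ∈ P, p.Prime) :
    (((Finset.range (∏ p ∈ P, p^2)).filter (fun n => ∀ p ∈ P, ¬ ExactDvd p n)).card : ℝ)
      ≤ ∏ p ∈ P, ((p:ℝ)^2 - (p - 1)) := by
  induction P using Finset.induction_on with
  | empty => simp
  | insert q P hq ih =>
    rw [Finset.prod_insert hq, Finset.prod_insert hq]
    have hP' : ∀ p ∈ P, p.Prime := fun p hp => hP p (Finset.mem_insert_of_mem hp)
    have hqp : q.Prime := hP q (Finset.mem_insert_self _ _)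
    have ih' := ih hP'
    set M := ∏ p ∈ P, p^2 with hM
    have hcop : Nat.Coprime (q^2) M := by
      apply Nat.Coprime.prod_right
      intro p hp
      apply Nat.Coprime.pow
      rw [Nat.coprime_primes hqp (hP' p hp)]
      rintro rfl
      exact hq hp
    have hMpos : 0 < M := Finset.prod_pos (fun p hp => pow_pos (hP' p hp).pos 2)
    have hle : ((Finset.range (q^2 * M)).filter (fun n => ∀ p ∈ insert q P, ¬ ExactDvd p n)).card
        ≤ (((Finset.range (q^2)).filter (fun n => ¬ ExactDvd q n)) ×ˢ ((Finset.range M).filter (fun n => ∀ p ∈ P, ¬ ExactDvd p n))).card := by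
      apply Finset.card_le_card_of_injOn (fun n => (n % (q^2), n % M))
      · intro n hn
        simp only [Finset.coe_filter, Finset.mem_range, Set.mem_ofPred_eq, Finset.mem_insert, forall_eq_or_imp] at hn
        simp only [Finset.coe_product, Set.mem_prod, Finset.coe_filter, Finset.mem_range, Set.mem_ofPred_eq]
        refine ⟨⟨Nat.mod_lt _ (pow_pos hqp.pos 2), ?_⟩, Nat.mod_lt _ hMpos, ?_⟩
        · rw [exactDvd_mod dvd_rfl]; exact hn.2.1
        · intro p hp
          rw [exactDvd_mod (Finset.dvd_prod_of_mem (fun p => p^2) hp)]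
          exact hn.2.2 p hp
      · intro a ha b hb hab
        simp only [Finset.coe_filter, Finset.mem_range, Set.mem_ofPred_eq] at ha hb
        simp only [Prod.mk.injEq] at hab
        have : a ≡ b [MOD (q^2 * M)] := (Nat.modEq_and_modEq_iff_modEq_mul hcop).mp ⟨hab.1, hab.2⟩
        exact Nat.ModEq.eq_of_lt_of_lt this ha.1 hb.1
    rw [Finset.card_product] at hle
    have hle' : (((Finset.range (q^2 * M)).filter (fun n => ∀ p ∈ insert q P, ¬ ExactDvd p n)).card : ℝ)
        ≤ (((Finset.range (q^2)).filter (fun n => ¬ ExactDvd q n)).card : ℝ) * (((Finset.range M).filter (fun n => ∀ p ∈ P, ¬ ExactDvd p n)).card : ℝ) := by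
      exact_mod_cast hle
    refine hle'.trans ?_
    have h1 := card_one q hqp.one_lt
    have h0 : (0:ℝ) ≤ (((Finset.range (q^2)).filter (fun n => ¬ ExactDvd q n)).card : ℝ) := Nat.cast_nonneg _
    gcongr
    linarith

open Classical in
lemma card_upto (P : Finset ℕ) (hP : ∀ p ∈ P, p.Prime) (N : ℕ) :
    (((Finset.Icc 1 N).filter (fun n => ∀ p ∈ P, ¬ ExactDvd p n)).card : ℝ)
      ≤ (N + ∏ p ∈ P, (p:ℝ)^2) * ∏ p ∈ P, (1 - ((p:ℝ) - 1) / p^2) := by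
  have hper := card_period P hP
  set M := ∏ p ∈ P, p^2 with hM
  have hMpos : 0 < M := Finset.prod_pos (fun p hp => pow_pos (hP p hp).pos 2)
  have hle : ((Finset.Icc 1 N).filter (fun n => ∀ p ∈ P, ¬ ExactDvd p n)).card
      ≤ ((Finset.range (N / M + 1)) ×ˢ ((Finset.range M).filter (fun n => ∀ p ∈ P, ¬ ExactDvd p n))).card := by
    apply Finset.card_le_card_of_injOn (fun n => (n / M, n % M))
    · intro n hn
      simp only [Finset.coe_filter, Finset.mem_Icc, Set.mem_ofPred_eq] at hn
      simp only [Finset.coe_product, Set.mem_prod, Finset.coe_filter, Finset.mem_range, Set.mem_ofPred_eq, Finset.coe_range, Set.mem_Iio]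
      refine ⟨Nat.lt_succ_of_le (Nat.div_le_div_right hn.1.2), Nat.mod_lt _ hMpos, ?_⟩
      intro p hp
      rw [exactDvd_mod (Finset.dvd_prod_of_mem (fun p => p^2) hp)]
      exact hn.2 p hp
    · intro a _ b _ hab
      simp only [Prod.mk.injEq] at hab
      rw [← Nat.div_add_mod a M, ← Nat.div_add_mod b M, hab.1, hab.2]
  rw [Finset.card_product, Finset.card_range] at hle
  have hMr : (M:ℝ) = ∏ p ∈ P, (p:ℝ)^2 := by rw [hM]; push_cast; rfl
  have hprod : ∏ p ∈ P, ((p:ℝ)^2 - (p - 1)) = (M:ℝ) * ∏ p ∈ P, (1 - ((p:ℝ) - 1) / p^2) := by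
    rw [hMr, ← Finset.prod_mul_distrib]
    apply Finset.prod_congr rfl
    intro p hp
    have : (p:ℝ) ≠ 0 := by exact_mod_cast (hP p hp).ne_zero
    field_simp
  have hnn : 0 ≤ ∏ p ∈ P, (1 - ((p:ℝ) - 1) / p^2) := by
    apply Finset.prod_nonneg
    intro p hp
    have : (1:ℝ) ≤ p := by exact_mod_cast (hP p hp).one_lt.le
    rw [sub_nonneg, div_le_one (by positivity)]
    nlinarith
  rw [← hMr]
  calc _ ≤ (((N / M + 1 : ℕ) : ℝ)) * (((Finset.range M).filter (fun n => ∀ p ∈ P, ¬ ExactDvd p n)).card : ℝ) := by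
        exact_mod_cast hle
    _ ≤ (((N / M + 1 : ℕ) : ℝ)) * (M * ∏ p ∈ P, (1 - ((p:ℝ) - 1) / p^2)) := by
        rw [← hprod]; gcongr
    _ = (((N / M + 1 : ℕ) : ℝ)) * M * ∏ p ∈ P, (1 - ((p:ℝ) - 1) / p^2) := by ring
    _ ≤ _ := by
        apply mul_le_mul_of_nonneg_right _ hnn
        have : (N / M + 1) * M ≤ N + M := by
          rw [add_mul, one_mul]; gcongr; exact Nat.div_mul_le_self N M
        exact_mod_cast this

lemma not_exactDvd_of_sq_add_sq {n p : ℕ} (hp : p.Prime) (h3 : p % 4 = 3) (hn : 0 < n)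
    (h : ∃ x y, n = x ^ 2 + y ^ 2) : ¬ ExactDvd p n := by
  rintro ⟨h1, h2⟩
  have := Fact.mk hp
  rw [Nat.eq_sq_add_sq_iff] at h
  have he := h p (Nat.mem_primeFactors.mpr ⟨hp, h1, hn.ne'⟩) h3
  have h4 : 1 ≤ padicValNat p n := one_le_padicValNat_of_dvd hn.ne' h1
  have h5 : padicValNat p n < 2 := by
    by_contra hc
    push Not at hc
    exact h2 ((padicValNat_dvd_iff_le hn.ne').mpr hc)
  have : padicValNat p n = 1 := by omega
  rw [this] at he
  exact absurd he (by decide)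

open Classical in
lemma density_zero (ε : ℝ) (hε : 0 < ε) : ∃ N₀ : ℕ, ∀ N : ℕ, N₀ ≤ N →
    (((Finset.Icc 1 N).filter (fun n => ∃ x y, n = x ^ 2 + y ^ 2)).card : ℝ) ≤ ε * N := by
  -- find P
  obtain ⟨P, hP, hsum⟩ : ∃ P : Finset ℕ, (∀ p ∈ P, p.Prime ∧ p % 4 = 3) ∧
      ∏ p ∈ P, (1 - ((p:ℝ) - 1) / p^2) ≤ ε / 2 := by
    have hns := not_summable_inv_three_mod_four
    set f := (fun n : ℕ => if n.Prime ∧ n % 4 = 3 then (1 / n : ℝ) else 0) with hf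
    have hf0 : ∀ n, 0 ≤ f n := by
      intro n; simp only [hf]; split_ifs
      · positivity
      · exact le_rfl
    have htend := (not_summable_iff_tendsto_nat_atTop_of_nonneg hf0).mp hns
    obtain ⟨m, hm⟩ := (htend.eventually_ge_atTop (2 * -Real.log (ε/2))).exists
    refine ⟨(Finset.range m).filter (fun n => n.Prime ∧ n % 4 = 3), fun p hp => (Finset.mem_filter.mp hp).2, ?_⟩
    have h1 : ∀ p ∈ (Finset.range m).filter (fun n => n.Prime ∧ n % 4 = 3),
        (1 - ((p:ℝ) - 1) / p^2) ≤ Real.exp (-(f p / 2)) := by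
      intro p hp
      have hpp := (Finset.mem_filter.mp hp).2
      have h2 : (2:ℝ) ≤ p := by exact_mod_cast hpp.1.two_le
      have e : f p = 1 / p := by simp only [hf]; rw [if_pos hpp]
      have := Real.add_one_le_exp (-(f p / 2))
      refine le_trans ?_ this
      rw [e]
      have : (1:ℝ)/p/2 ≤ ((p:ℝ) - 1) / p^2 := by
        rw [div_div, div_le_div_iff₀ (by positivity) (by positivity)]
        nlinarith
      linarith
    calc _ ≤ ∏ p ∈ (Finset.range m).filter (fun n => n.Prime ∧ n % 4 = 3), Real.exp (-(f p / 2)) := by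
          apply Finset.prod_le_prod _ h1
          intro p hp
          have : (1:ℝ) ≤ p := by exact_mod_cast (Finset.mem_filter.mp hp).2.1.one_lt.le
          rw [sub_nonneg, div_le_one (by positivity)]
          nlinarith
      _ = Real.exp (-((∑ p ∈ Finset.range m, f p) / 2)) := by
          rw [← Real.exp_sum]
          congr 1
          rw [Finset.sum_neg_distrib, ← Finset.sum_div, Finset.sum_filter]
          congr 2
          apply Finset.sum_congr rfl
          intro p _
          simp only [hf]
          split_ifs <;> simp
      _ ≤ Real.exp (Real.log (ε/2)) := by
          apply Real.exp_le_exp.mpr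
          linarith
      _ = ε/2 := Real.exp_log (by positivity)
  refine ⟨∏ p ∈ P, p^2, fun N hN => ?_⟩
  have h1 := card_upto P (fun p hp => (hP p hp).1) N
  have h2 : ((Finset.Icc 1 N).filter (fun n => ∃ x y, n = x ^ 2 + y ^ 2)).card
      ≤ ((Finset.Icc 1 N).filter (fun n => ∀ p ∈ P, ¬ ExactDvd p n)).card := by
    apply Finset.card_le_card
    intro n hn
    rw [Finset.mem_filter, Finset.mem_Icc] at hn ⊢
    exact ⟨hn.1, fun p hp => not_exactDvd_of_sq_add_sq (hP p hp).1 (hP p hp).2 hn.1.1 hn.2⟩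
  have h3 : (∏ p ∈ P, (p:ℝ)^2) ≤ N := by exact_mod_cast hN
  have h4 : (0:ℝ) ≤ N + ∏ p ∈ P, (p:ℝ)^2 := by positivity
  calc _ ≤ (((Finset.Icc 1 N).filter (fun n => ∀ p ∈ P, ¬ ExactDvd p n)).card : ℝ) := by exact_mod_cast h2
    _ ≤ _ := h1
    _ ≤ (N + ∏ p ∈ P, (p:ℝ)^2) * (ε/2) := by gcongr
    _ ≤ (N + N) * (ε/2) := by gcongr
    _ = ε * N := by ring

/-! ### Cells and Riemann sums -/

/-- rounding down to the lattice `h ℤ[i]` -/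
noncomputable def fl (h : ℝ) (z : ℂ) : ℂ := ⟨h * ⌊z.re / h⌋, h * ⌊z.im / h⌋⟩

lemma fl_dist {h : ℝ} (hh : 0 < h) (z : ℂ) : ‖z - fl h z‖ ≤ 2 * h := by
  have aux : ∀ x : ℝ, |x - h * ⌊x / h⌋| ≤ h := by
    intro x
    have h1 := Int.floor_le (x / h)
    have h2 := Int.lt_floor_add_one (x / h)
    rw [le_div_iff₀ hh] at h1
    rw [div_lt_iff₀ hh] at h2
    rw [abs_le]
    constructor <;> nlinarith
  refine (Complex.norm_le_abs_re_add_abs_im _).trans ?_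
  have h1 := aux z.re
  have h2 := aux z.im
  simp only [fl, Complex.sub_re, Complex.sub_im]
  linarith

/-- the cell attached to a lattice point -/
def cell (h : ℝ) (ζ : GaussianInt) : Set ℂ := {z | ⌊z.re / h⌋ = ζ.re ∧ ⌊z.im / h⌋ = ζ.im}

lemma cell_eq {h : ℝ} (hh : 0 < h) (ζ : GaussianInt) :
    cell h ζ = Complex.measurableEquivRealProd ⁻¹'
      ((Set.Ico (h * ζ.re) (h * (ζ.re + 1))) ×ˢ (Set.Ico (h * ζ.im) (h * (ζ.im + 1)))) := by
  ext z
  simp only [cell, Set.mem_ofPred_eq, Set.mem_preimage, Set.mem_prod, Set.mem_Ico,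
    Complex.measurableEquivRealProd_apply, Int.floor_eq_iff, le_div_iff₀ hh, div_lt_iff₀ hh]
  simp only [mul_comm h]

lemma measurableSet_cell {h : ℝ} (hh : 0 < h) (ζ : GaussianInt) : MeasurableSet (cell h ζ) := by
  rw [cell_eq hh]
  exact Complex.measurableEquivRealProd.measurable (measurableSet_Ico.prod measurableSet_Ico)

lemma volume_cell {h : ℝ} (hh : 0 < h) (ζ : GaussianInt) :
    MeasureTheory.volume (cell h ζ) = ENNReal.ofReal (h ^ 2) := by
  rw [cell_eq hh, Complex.volume_preserving_equiv_real_prod.measure_preimage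
    (measurableSet_Ico.prod measurableSet_Ico).nullMeasurableSet, MeasureTheory.Measure.volume_eq_prod,
    MeasureTheory.Measure.prod_prod, Real.volume_Ico, Real.volume_Ico, ← ENNReal.ofReal_mul (by nlinarith)]
  congr 1
  ring

lemma cell_sum {E : Type*} [NormedAddCommGroup E] [NormedSpace ℝ E] [CompleteSpace E] {h : ℝ} (hh : 0 < h) (F : ℂ → E)
    (s : Finset GaussianInt) (hF : ∀ ζ : GaussianInt, ζ ∉ s → F ((h : ℂ) * (ζ : ℂ)) = 0) :
    MeasureTheory.Integrable (fun z => F (fl h z)) ∧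
    ∫ z, F (fl h z) = (h ^ 2) • ∑ ζ ∈ s, F ((h : ℂ) * (ζ : ℂ)) := by
  classical
  have heq : (fun z => F (fl h z)) = fun z => ∑ ζ ∈ s, (cell h ζ).indicator (fun _ => F ((h : ℂ) * (ζ : ℂ))) z := by
    funext z
    set ζ₀ : GaussianInt := ⟨⌊z.re / h⌋, ⌊z.im / h⌋⟩ with hζ₀
    have hfl : fl h z = (h : ℂ) * (ζ₀ : ℂ) := by
      apply Complex.ext <;> simp [fl, hζ₀, GaussianInt.toComplex_def]
    have hcell : ∀ ζ : GaussianInt, z ∈ cell h ζ ↔ ζ = ζ₀ := by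
      intro ζ
      simp only [cell, Set.mem_ofPred_eq, hζ₀, Zsqrtd.ext_iff]
      constructor
      · exact fun h => ⟨h.1.symm, h.2.symm⟩
      · exact fun h => ⟨h.1.symm, h.2.symm⟩
    simp only [Set.indicator_apply, hcell]
    rw [Finset.sum_ite_eq']
    split_ifs with hs
    · rw [hfl]
    · rw [hfl, hF _ hs]
  have hint : ∀ ζ ∈ s, MeasureTheory.Integrable ((cell h ζ).indicator (fun _ => F ((h : ℂ) * (ζ : ℂ)))) := by
    intro ζ _
    rw [MeasureTheory.integrable_indicator_iff (measurableSet_cell hh ζ)]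
    refine MeasureTheory.integrableOn_const ?_
    rw [volume_cell hh]; exact ENNReal.ofReal_ne_top
  rw [heq]
  refine ⟨MeasureTheory.integrable_finsetSum _ hint, ?_⟩
  rw [MeasureTheory.integral_finsetSum _ hint, Finset.smul_sum]
  apply Finset.sum_congr rfl
  intro ζ _
  rw [MeasureTheory.integral_indicator_const _ (measurableSet_cell hh ζ), MeasureTheory.measureReal_def, volume_cell hh,
    ENNReal.toReal_ofReal (by positivity)]

lemma norm_pow_sub_pow_le {a b : ℂ} (ha : ‖a‖ = 1) (hb : ‖b‖ = 1) (n : ℕ) : ‖a ^ n - b ^ n‖ ≤ n * ‖a - b‖ := by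
  induction n with
  | zero => simp
  | succ n ih =>
    have : a ^ (n+1) - b ^ (n+1) = a ^ n * (a - b) + (a ^ n - b ^ n) * b := by ring
    rw [this]
    refine (norm_add_le _ _).trans ?_
    rw [norm_mul, norm_mul, norm_pow, ha, hb, one_pow]
    push_cast
    linarith

lemma norm_zpow_sub_zpow_le {a b : ℂ} (ha : ‖a‖ = 1) (hb : ‖b‖ = 1) (k : ℤ) : ‖a ^ k - b ^ k‖ ≤ |(k:ℝ)| * ‖a - b‖ := by
  obtain ⟨n, rfl | rfl⟩ := k.eq_nat_or_neg
  · have := norm_pow_sub_pow_le ha hb n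
    simpa using this
  · have := norm_pow_sub_pow_le ha hb n
    have ha0 : a ^ n ≠ 0 := pow_ne_zero _ (by intro h; simp [h] at ha)
    have hb0 : b ^ n ≠ 0 := pow_ne_zero _ (by intro h; simp [h] at hb)
    rw [zpow_neg, zpow_neg, zpow_natCast, zpow_natCast, inv_sub_inv ha0 hb0, norm_div, norm_mul, norm_pow, norm_pow,
      ha, hb, norm_sub_rev]
    simpa using this

lemma lam_sub_le (k : ℤ) {z w : ℂ} (hz : z ≠ 0) (hw : w ≠ 0) :
    ‖lam k z - lam k w‖ ≤ |(k:ℝ)| * (2 * ‖z - w‖ / ‖z‖) := by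
  have hz' : 0 < ‖z‖ := norm_pos_iff.mpr hz
  have hw' : 0 < ‖w‖ := norm_pos_iff.mpr hw
  have h1 : ‖z / (‖z‖ : ℂ)‖ = 1 := by
    rw [norm_div, Complex.norm_real, norm_norm, div_self hz'.ne']
  have h2 : ‖w / (‖w‖ : ℂ)‖ = 1 := by
    rw [norm_div, Complex.norm_real, norm_norm, div_self hw'.ne']
  refine (norm_zpow_sub_zpow_le h1 h2 k).trans ?_
  apply mul_le_mul_of_nonneg_left _ (abs_nonneg _)
  have hzc : (‖z‖ : ℂ) ≠ 0 := by exact_mod_cast hz'.ne'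
  have hwc : (‖w‖ : ℂ) ≠ 0 := by exact_mod_cast hw'.ne'
  have e : z / (‖z‖ : ℂ) - w / (‖w‖ : ℂ) = (z - w) / (‖z‖ : ℂ) + (w / (‖w‖ : ℂ)) * (((‖w‖ - ‖z‖ : ℝ) : ℂ) / (‖z‖ : ℂ)) := by
    push_cast
    field_simp
    ring
  rw [e]
  refine (norm_add_le _ _).trans ?_
  rw [norm_mul, h2, one_mul, norm_div, norm_div, Complex.norm_real, Complex.norm_real, norm_norm, ← add_div]
  gcongr
  have := abs_norm_sub_norm_le w z
  rw [norm_sub_rev w z] at this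
  rw [Real.norm_eq_abs]
  linarith

lemma measurable_lam (k : ℤ) : Measurable (lam k) := by
  unfold lam
  fun_prop

/-- the truncated character -/
noncomputable def lamT (k : ℤ) (ρ : ℝ) (z : ℂ) : ℂ := (Metric.closedBall (0:ℂ) ρ).indicator (lam k) z

lemma integrable_lamT {k : ℤ} (hk : k ≠ 0) (ρ : ℝ) : MeasureTheory.Integrable (lamT k ρ) := by
  have : lamT k ρ = (Metric.closedBall (0:ℂ) ρ).indicator (lam k) := rfl
  rw [this, MeasureTheory.integrable_indicator_iff measurableSet_closedBall]
  apply MeasureTheory.Measure.integrableOn_of_bounded (M := 1)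
  · exact (isCompact_closedBall (0:ℂ) ρ).measure_lt_top.ne
  · exact (measurable_lam k).aestronglyMeasurable
  · filter_upwards with z
    exact norm_lam_le hk z

lemma integral_lamT {k : ℤ} (hk : k ≠ 0) (ρ : ℝ) : ∫ z, lamT k ρ z = 0 := by
  set a : ℂ := Complex.exp ((Real.pi / k : ℝ) * Complex.I) with ha
  have hna : ‖a‖ = 1 := Complex.norm_exp_ofReal_mul_I _
  have hla : lam k a = -1 := by
    unfold lam
    rw [hna, Complex.ofReal_one, div_one, ha, ← Complex.exp_int_mul]
    have hk' : (k:ℂ) ≠ 0 := by exact_mod_cast hk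
    rw [← Complex.exp_pi_mul_I]
    congr 1
    push_cast
    field_simp
  have hcov : ∫ z, lamT k ρ (a * z) = ∫ z, lamT k ρ z := by
    have := (rotation (⟨a, mem_sphere_zero_iff_norm.mpr hna⟩ : Circle)).measurePreserving.integral_comp
      (rotation (⟨a, mem_sphere_zero_iff_norm.mpr hna⟩ : Circle)).toHomeomorph.measurableEmbedding (lamT k ρ)
    exact this
  have hmul : ∀ z, lamT k ρ (a * z) = - lamT k ρ z := by
    classical
    intro z
    simp only [lamT, Set.indicator_apply, mem_closedBall_zero_iff, norm_mul, hna, one_mul, lam_mul, hla]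
    split_ifs <;> simp
  rw [show (fun z => lamT k ρ (a * z)) = fun z => - lamT k ρ z from funext hmul, MeasureTheory.integral_neg] at hcov
  have h2 : (2:ℂ) * ∫ z, lamT k ρ z = 0 := by linear_combination -hcov
  simpa using h2

lemma integral_ball_const {a : ℝ} (ha : 0 ≤ a) (c : ℝ) :
    MeasureTheory.Integrable ((Metric.closedBall (0:ℂ) a).indicator (fun _ => c)) ∧
    ∫ z, (Metric.closedBall (0:ℂ) a).indicator (fun _ => c) z = c * (Real.pi * a ^ 2) := by
  constructor
  · rw [MeasureTheory.integrable_indicator_iff measurableSet_closedBall]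
    exact MeasureTheory.integrableOn_const (isCompact_closedBall (0:ℂ) a).measure_lt_top.ne
  · rw [MeasureTheory.integral_indicator_const _ measurableSet_closedBall, MeasureTheory.measureReal_def, Complex.volume_closedBall]
    rw [ENNReal.toReal_mul, ENNReal.toReal_pow, ENNReal.toReal_ofReal ha]
    simp [NNReal.coe_real_pi]
    ring

lemma normSq_toComplex (z : GaussianInt) : ‖(z : ℂ)‖ ^ 2 = (z.norm : ℝ) := by
  rw [GaussianInt.intCast_real_norm, Complex.normSq_eq_norm_sq]

lemma M_bound {k : ℤ} (hk : k ≠ 0) : ∃ C : ℝ, 0 ≤ C ∧ ∀ N : ℕ, 1 ≤ N →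
    ‖∑ x ∈ gball N, lam k (x : ℂ)‖ ≤ C * (√(√(N:ℝ))) ^ 3 := by
  refine ⟨Real.pi * (82 + 36 * |(k:ℝ)|), by positivity, fun N hN => ?_⟩
  set ρ := √(N:ℝ) with hρ
  set t := √ρ with ht
  have hN1 : (1:ℝ) ≤ N := by exact_mod_cast hN
  have hρ1 : 1 ≤ ρ := Real.one_le_sqrt.mpr hN1
  have ht1 : 1 ≤ t := Real.one_le_sqrt.mpr hρ1
  have htρ : t ^ 2 = ρ := Real.sq_sqrt (by linarith)
  have hρN : ρ ^ 2 = N := Real.sq_sqrt (by linarith)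
  have hz : ∀ ζ : GaussianInt, ζ ∉ gball N → lamT k ρ (((1:ℝ) : ℂ) * (ζ : ℂ)) = 0 := by
    intro ζ hζ
    rw [Complex.ofReal_one, one_mul]
    by_cases h0 : ζ = 0
    · rw [h0]
      simp [lamT, Set.indicator_apply, lam_zero hk]
    · rw [mem_gball] at hζ
      push Not at hζ
      have h1 := hζ h0
      simp only [lamT]
      rw [Set.indicator_of_notMem]
      rw [mem_closedBall_zero_iff]
      intro hle
      have h2 : ‖(ζ:ℂ)‖^2 ≤ ρ^2 := by gcongr
      rw [normSq_toComplex, hρN] at h2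
      have : ζ.norm ≤ N := by exact_mod_cast h2
      omega
  obtain ⟨hi, hs⟩ := cell_sum one_pos (lamT k ρ) (gball N) hz
  have hsum : ∑ x ∈ gball N, lam k (x : ℂ) = ∫ z, (lamT k ρ (fl 1 z) - lamT k ρ z) := by
    rw [MeasureTheory.integral_sub hi (integrable_lamT hk ρ), integral_lamT hk, sub_zero, hs]
    rw [one_pow, one_smul]
    apply Finset.sum_congr rfl
    intro x hx
    rw [mem_gball] at hx
    rw [Complex.ofReal_one, one_mul, lamT, Set.indicator_of_mem]
    rw [mem_closedBall_zero_iff]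
    apply Real.le_sqrt_of_sq_le
    rw [normSq_toComplex]
    exact_mod_cast hx.2
  rw [hsum]
  set a := max 0 (ρ - 2) with haa
  have ha0 : 0 ≤ a := le_max_left _ _
  have haρ : a ≤ ρ + 2 := max_le (by linarith) (by linarith)
  obtain ⟨i1, e1⟩ := integral_ball_const (show 0 ≤ t + 4 by linarith) 2
  obtain ⟨i2, e2⟩ := integral_ball_const (show 0 ≤ ρ + 2 by linarith) 2
  obtain ⟨i3, e3⟩ := integral_ball_const ha0 2
  obtain ⟨i4, e4⟩ := integral_ball_const (show 0 ≤ ρ + 2 by linarith) (4 * |(k:ℝ)| / t)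
  have hb1 : ∀ z, ‖lamT k ρ z‖ ≤ 1 := by
    classical
    intro z
    simp only [lamT, Set.indicator_apply]
    split_ifs
    · exact norm_lam_le hk z
    · simp
  have hk0 : 0 ≤ 4 * |(k:ℝ)| / t := by positivity
  have hpt : ∀ z, ‖lamT k ρ (fl 1 z) - lamT k ρ z‖ ≤
      ((Metric.closedBall (0:ℂ) (t+4)).indicator (fun _ => (2:ℝ)) z
      + ((Metric.closedBall (0:ℂ) (ρ+2)).indicator (fun _ => (2:ℝ)) z
        - (Metric.closedBall (0:ℂ) a).indicator (fun _ => (2:ℝ)) z))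
      + (Metric.closedBall (0:ℂ) (ρ+2)).indicator (fun _ => 4 * |(k:ℝ)| / t) z := by
    intro z
    have hd : ‖z - fl 1 z‖ ≤ 2 := by have := fl_dist one_pos z; linarith
    have hd2 : ‖z‖ - ‖fl 1 z‖ ≤ 2 := (norm_sub_norm_le _ _).trans hd
    have hd3 : ‖fl 1 z‖ - ‖z‖ ≤ 2 := (norm_sub_norm_le _ _).trans (by rw [norm_sub_rev]; exact hd)
    have htriv : ‖lamT k ρ (fl 1 z) - lamT k ρ z‖ ≤ 2 := by
      refine (norm_sub_le _ _).trans ?_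
      linarith [hb1 z, hb1 (fl 1 z)]
    classical
    simp only [Set.indicator_apply, mem_closedBall_zero_iff]
    by_cases c1 : ‖z‖ ≤ t + 4
    · rw [if_pos c1]
      have : (0:ℝ) ≤ (if ‖z‖ ≤ ρ + 2 then (2:ℝ) else 0) - (if ‖z‖ ≤ a then (2:ℝ) else 0) := by
        split_ifs
        · norm_num
        · norm_num
        · linarith
        · norm_num
      have h4 : (0:ℝ) ≤ (if ‖z‖ ≤ ρ + 2 then 4 * |(k:ℝ)| / t else 0) := by
        split_ifs
        · exact hk0
        · exact le_rfl
      linarith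
    · rw [if_neg c1]
      push Not at c1
      by_cases c2 : ‖z‖ ≤ ρ + 2
      · rw [if_pos c2, if_pos c2]
        by_cases c3 : ‖z‖ ≤ a
        · rw [if_pos c3]
          have c4 : ‖z‖ ≤ ρ - 2 := by
            rcases le_max_iff.mp c3 with h | h
            · linarith
            · exact h
          have hz0 : z ≠ 0 := by intro h; rw [h, norm_zero] at c1; linarith
          have hw0 : fl 1 z ≠ 0 := by intro h; rw [h, norm_zero] at hd2; linarith
          rw [lamT, lamT, Set.indicator_of_mem (by rw [mem_closedBall_zero_iff]; linarith),
            Set.indicator_of_mem (by rw [mem_closedBall_zero_iff]; linarith), norm_sub_rev]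
          refine (lam_sub_le k hz0 hw0).trans ?_
          calc |(k:ℝ)| * (2 * ‖z - fl 1 z‖ / ‖z‖) ≤ |(k:ℝ)| * (2 * 2 / t) := by
                gcongr
                linarith
            _ = _ := by ring
        · rw [if_neg c3]
          linarith
      · rw [if_neg c2, if_neg c2]
        push Not at c2
        rw [if_neg (by push Not; linarith)]
        rw [lamT, lamT, Set.indicator_of_notMem (by rw [mem_closedBall_zero_iff]; push Not; linarith),
            Set.indicator_of_notMem (by rw [mem_closedBall_zero_iff]; push Not; linarith)]
        simp
  refine (MeasureTheory.norm_integral_le_of_norm_le ((i1.add (i2.sub i3)).add i4) (Filter.Eventually.of_forall hpt)).trans ?_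
  simp only [Pi.add_apply, Pi.sub_apply]
  have eI : ∫ z, (((Metric.closedBall (0:ℂ) (t+4)).indicator (fun _ => (2:ℝ)) z
      + ((Metric.closedBall (0:ℂ) (ρ+2)).indicator (fun _ => (2:ℝ)) z
        - (Metric.closedBall (0:ℂ) a).indicator (fun _ => (2:ℝ)) z))
      + (Metric.closedBall (0:ℂ) (ρ+2)).indicator (fun _ => 4 * |(k:ℝ)| / t) z)
      = (2 * (Real.pi * (t+4)^2) + (2 * (Real.pi * (ρ+2)^2) - 2 * (Real.pi * a^2))) + 4 * |(k:ℝ)| / t * (Real.pi * (ρ+2)^2) := by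
    have q1 := MeasureTheory.integral_sub i2 i3
    have q2 := MeasureTheory.integral_add i1 (i2.sub i3)
    have q3 := MeasureTheory.integral_add (i1.add (i2.sub i3)) i4
    simp only [Pi.add_apply, Pi.sub_apply] at q1 q2 q3
    rw [q3, q2, q1, e1, e2, e3, e4]
  rw [eI]
  have b1 : (t+4)^2 ≤ 25 * t^3 := by nlinarith [mul_nonneg (sub_nonneg.mpr ht1) (sub_nonneg.mpr ht1), pow_le_pow_left₀ zero_le_one ht1 2, mul_nonneg (sub_nonneg.mpr ht1) (sq_nonneg t)]
  have b2 : (ρ+2)^2 - a^2 ≤ 16 * t^3 := by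
    have : (ρ+2)^2 - a^2 ≤ 16 * ρ := by
      by_cases h2 : 2 ≤ ρ
      · have : a = ρ - 2 := max_eq_right (by linarith)
        rw [this]; nlinarith
      · push Not at h2
        nlinarith [sq_nonneg a]
    have h3 : ρ ≤ t^3 := by rw [← htρ]; nlinarith [sq_nonneg t]
    linarith
  have b3 : 4 * |(k:ℝ)| / t * (Real.pi * (ρ+2)^2) ≤ Real.pi * (36 * |(k:ℝ)|) * t^3 := by
    have : (ρ+2)^2 ≤ 9 * t^4 := by
      have : t^4 = ρ^2 := by rw [← htρ]; ring
      rw [this]; nlinarith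
    calc _ ≤ 4 * |(k:ℝ)| / t * (Real.pi * (9 * t^4)) := by gcongr
      _ = _ := by field_simp; ring
  have hpi := Real.pi_pos
  have : Real.pi * (t+4)^2 ≤ Real.pi * (25 * t^3) := by gcongr
  have : Real.pi * ((ρ+2)^2 - a^2) ≤ Real.pi * (16 * t^3) := by gcongr
  nlinarith

/-! ### Second moment of the exponential sums -/

lemma sqrt_sqrt_step (n : ℕ) :
    1 / (√(√((n+1 : ℕ) : ℝ))) ^ 3 ≤ 4 * (√(√((n+1 : ℕ) : ℝ)) - √(√(n : ℝ))) := by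
  set u := √(√((n+1 : ℕ) : ℝ)) with hu
  set v := √(√(n : ℝ)) with hv
  have hu4 : u ^ 4 = n + 1 := by
    rw [show u ^ 4 = (u ^ 2) ^ 2 by ring, Real.sq_sqrt (Real.sqrt_nonneg _), Real.sq_sqrt (by positivity)]
    push_cast; rfl
  have hv4 : v ^ 4 = n := by
    rw [show v ^ 4 = (v ^ 2) ^ 2 by ring, Real.sq_sqrt (Real.sqrt_nonneg _), Real.sq_sqrt (by positivity)]
  have hv0 : 0 ≤ v := Real.sqrt_nonneg _
  have huv : v ≤ u := Real.sqrt_le_sqrt (Real.sqrt_le_sqrt (by push_cast; linarith))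
  have hu0 : 0 < u := by
    rw [hu]; positivity
  rw [div_le_iff₀ (by positivity)]
  have h1 : (u - v) * (u^3 + u^2*v + u*v^2 + v^3) = 1 := by
    have : (u - v) * (u^3 + u^2*v + u*v^2 + v^3) = u^4 - v^4 := by ring
    rw [this, hu4, hv4]; ring
  have h2 : u^3 + u^2*v + u*v^2 + v^3 ≤ 4 * u^3 := by
    have a1 : u^2*v ≤ u^2 * u := by gcongr
    have a2 : u*v^2 ≤ u * u^2 := by gcongr
    have a3 : v^3 ≤ u^3 := by gcongr
    nlinarith
  have := mul_le_mul_of_nonneg_left h2 (sub_nonneg.mpr huv)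
  nlinarith

/-- weight for the one-dimensional sums -/
noncomputable def wgt (a : ℤ) : ℝ := 1 / (√(√((max 1 a.natAbs : ℕ) : ℝ))) ^ 3

lemma wgt_nonneg (a : ℤ) : 0 ≤ wgt a := by unfold wgt; positivity

lemma sum_wgt (L : ℕ) : ∑ a ∈ Finset.Icc (-(L:ℤ)) L, wgt a ≤ 1 + 8 * √(√(L:ℝ)) := by
  induction L with
  | zero => simp [wgt]
  | succ L ih =>
    have e : Finset.Icc (-((L+1 : ℕ):ℤ)) ((L+1 : ℕ):ℤ) = insert ((L:ℤ)+1) (insert (-((L:ℤ)+1)) (Finset.Icc (-(L:ℤ)) L)) := by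
      ext a
      simp only [Finset.mem_Icc, Finset.mem_insert]
      push_cast
      omega
    rw [e, Finset.sum_insert, Finset.sum_insert]
    · have w1 : wgt ((L:ℤ)+1) = 1 / (√(√((L+1 : ℕ) : ℝ))) ^ 3 := by
        unfold wgt
        rw [show (max 1 ((L:ℤ)+1).natAbs) = L + 1 by omega]
      have w2 : wgt (-((L:ℤ)+1)) = 1 / (√(√((L+1 : ℕ) : ℝ))) ^ 3 := by
        unfold wgt
        rw [show (max 1 (-((L:ℤ)+1)).natAbs) = L + 1 by omega]
      rw [w1, w2]
      have := sqrt_sqrt_step L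
      linarith
    · simp
    · simp only [Finset.mem_Icc, Finset.mem_insert]
      omega

lemma sum_inv_norm {N : ℕ} (hN : 1 ≤ N) :
    ∑ c ∈ gball N, 1 / (√(√(c.norm : ℝ))) ^ 3 ≤ 81 * √(√(N:ℝ)) := by
  set L := Nat.sqrt N with hL
  have hL1 : 1 ≤ L := by rw [hL, Nat.le_sqrt]; simpa using hN
  have h1 : ∑ c ∈ gball N, 1 / (√(√(c.norm : ℝ))) ^ 3 ≤ ∑ c ∈ gball N, wgt c.re * wgt c.im := by
    apply Finset.sum_le_sum
    intro c hc
    rw [mem_gball] at hc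
    unfold wgt
    rw [one_div_mul_one_div, ← mul_pow, ← Real.sqrt_mul (Real.sqrt_nonneg _), ← Real.sqrt_mul (by positivity)]
    have hle : ((max 1 c.re.natAbs : ℕ) : ℝ) * ((max 1 c.im.natAbs : ℕ) : ℝ) ≤ (c.norm : ℝ) := by
      have : ((max 1 c.re.natAbs : ℕ) : ℤ) * ((max 1 c.im.natAbs : ℕ) : ℤ) ≤ c.norm := by
        have hn : c.norm = c.re ^ 2 + c.im ^ 2 := by rw [Zsqrtd.norm_def]; ring
        have ha : ((c.re.natAbs : ℤ))^2 = c.re^2 := Int.natAbs_sq _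
        have hb : ((c.im.natAbs : ℤ))^2 = c.im^2 := Int.natAbs_sq _
        rw [hn, ← ha, ← hb]
        have hne : c.re.natAbs ≠ 0 ∨ c.im.natAbs ≠ 0 := by
          by_contra hcon
          push Not at hcon
          apply hc.1
          apply Zsqrtd.ext
          · simpa using hcon.1
          · simpa using hcon.2
        generalize c.re.natAbs = a at *
        generalize c.im.natAbs = b at *
        rcases Nat.eq_zero_or_pos a with h0 | h0
        · subst h0
          have : 1 ≤ b := by omega
          rw [max_eq_left (by norm_num), max_eq_right this]
          have : (1:ℤ) ≤ b := by exact_mod_cast this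
          push_cast; nlinarith
        · rcases Nat.eq_zero_or_pos b with h1 | h1
          · subst h1
            rw [max_eq_right h0, max_eq_left (by norm_num)]
            have : (1:ℤ) ≤ a := by exact_mod_cast h0
            push_cast; nlinarith
          · rw [max_eq_right h0, max_eq_right h1]
            nlinarith [sq_nonneg ((a:ℤ) - b), sq_nonneg ((a:ℤ) + b)]
      have h := (Int.cast_le (R := ℝ)).mpr this
      rwa [Int.cast_mul, Int.cast_natCast, Int.cast_natCast] at h
    have hp : (0:ℝ) < ((max 1 c.re.natAbs : ℕ) : ℝ) * ((max 1 c.im.natAbs : ℕ) : ℝ) := by positivity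
    gcongr
  have h2 : ∑ c ∈ gball N, wgt c.re * wgt c.im ≤
      ∑ p ∈ Finset.Icc (-(L:ℤ)) L ×ˢ Finset.Icc (-(L:ℤ)) L, wgt p.1 * wgt p.2 := by
    rw [← Finset.sum_image (s := gball N) (g := fun c : GaussianInt => (c.re, c.im)) (f := fun p : ℤ × ℤ => wgt p.1 * wgt p.2)]
    · apply Finset.sum_le_sum_of_subset_of_nonneg
      · intro p hp
        rw [Finset.mem_image] at hp
        obtain ⟨c, hc, rfl⟩ := hp
        rw [mem_gball] at hc
        have hn : c.norm = c.re ^ 2 + c.im ^ 2 := by rw [Zsqrtd.norm_def]; ring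
        have aux : ∀ a : ℤ, a ^ 2 ≤ N → -(L:ℤ) ≤ a ∧ a ≤ L := by
          intro a ha
          have : a.natAbs ≤ L := by
            rw [hL, Nat.le_sqrt']
            zify
            rw [sq_abs]
            exact ha
          omega
        simp only [Finset.mem_product, Finset.mem_Icc]
        exact ⟨aux _ (by nlinarith [hc.2, sq_nonneg c.im]), aux _ (by nlinarith [hc.2, sq_nonneg c.re])⟩
      · intro p _ _
        exact mul_nonneg (wgt_nonneg _) (wgt_nonneg _)
    · intro c _ d _ h
      simp only [Prod.mk.injEq] at h
      exact Zsqrtd.ext h.1 h.2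
  have h3 : ∑ p ∈ Finset.Icc (-(L:ℤ)) L ×ˢ Finset.Icc (-(L:ℤ)) L, wgt p.1 * wgt p.2
      = (∑ a ∈ Finset.Icc (-(L:ℤ)) L, wgt a) ^ 2 := by
    rw [sq, Finset.sum_mul_sum, Finset.sum_product]
  refine h1.trans (h2.trans ?_)
  rw [h3]
  have h4 := sum_wgt L
  have hq1 : 1 ≤ √(√(L:ℝ)) := Real.one_le_sqrt.mpr (Real.one_le_sqrt.mpr (by exact_mod_cast hL1))
  have h5 : ∑ a ∈ Finset.Icc (-(L:ℤ)) L, wgt a ≤ 9 * √(√(L:ℝ)) := by linarith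
  have h0 : 0 ≤ ∑ a ∈ Finset.Icc (-(L:ℤ)) L, wgt a := Finset.sum_nonneg (fun a _ => wgt_nonneg a)
  calc (∑ a ∈ Finset.Icc (-(L:ℤ)) L, wgt a) ^ 2 ≤ (9 * √(√(L:ℝ))) ^ 2 := by gcongr
    _ = 81 * √(L:ℝ) := by rw [mul_pow, Real.sq_sqrt (Real.sqrt_nonneg _)]; norm_num
    _ ≤ 81 * √(√(N:ℝ)) := by
      gcongr
      apply Real.le_sqrt_of_sq_le
      have : L ^ 2 ≤ N := by rw [hL, sq]; exact Nat.sqrt_le N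
      exact_mod_cast this

lemma norm_pos_of_mem {N : ℕ} {c : GaussianInt} (hc : c ∈ gball N) : 1 ≤ c.norm := by
  rw [mem_gball] at hc
  have := GaussianInt.norm_pos.mpr hc.1
  omega

lemma sum_gV (N : ℕ) (k : ℤ) : ∑ n ∈ Finset.Icc 1 N, gV n k
    = ∑ c ∈ gball N, ∑ x ∈ gball (N / c.norm.toNat), lam k (x : ℂ) := by
  have h1 : ∀ n ∈ Finset.Icc 1 N, gV n k
      = ∑ c ∈ gball N, ∑ x ∈ gball N, if c.norm * x.norm = n then lam k (x:ℂ) else 0 := by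
    intro n hn
    rw [Finset.mem_Icc] at hn
    have hsub : gball n ⊆ gball N := by
      intro c hc
      rw [mem_gball] at hc ⊢
      exact ⟨hc.1, by omega⟩
    unfold gV
    rw [Finset.sum_subset hsub]
    · apply Finset.sum_congr rfl
      intro c hc
      apply Finset.sum_subset hsub
      intro x hx hx'
      rw [if_neg]
      intro h
      apply hx'
      have h1 := norm_pos_of_mem hc
      have h2 := norm_pos_of_mem hx
      rw [mem_gball] at hx ⊢
      exact ⟨hx.1, by nlinarith⟩
    · intro c hc hc'
      apply Finset.sum_eq_zero
      intro x hx
      rw [if_neg]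
      intro h
      apply hc'
      have h1 := norm_pos_of_mem hc
      have h2 := norm_pos_of_mem hx
      rw [mem_gball] at hc ⊢
      exact ⟨hc.1, by nlinarith⟩
  rw [Finset.sum_congr rfl h1, Finset.sum_comm]
  apply Finset.sum_congr rfl
  intro c hc
  rw [Finset.sum_comm]
  have hc1 := norm_pos_of_mem hc
  obtain ⟨m, hm⟩ := Int.eq_ofNat_of_zero_le (show 0 ≤ c.norm by omega)
  rw [hm, Int.toNat_natCast]
  have hm1 : 1 ≤ m := by omega
  have hsub : gball (N / m) ⊆ gball N := by
    intro x hx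
    rw [mem_gball] at hx ⊢
    have := Nat.div_le_self N m
    exact ⟨hx.1, by omega⟩
  rw [← Finset.sum_subset hsub]
  · apply Finset.sum_congr rfl
    intro x hx
    have hx1 := norm_pos_of_mem hx
    rw [mem_gball] at hx
    obtain ⟨j, hj⟩ := Int.eq_ofNat_of_zero_le (show 0 ≤ x.norm by omega)
    rw [hj] at hx hx1 ⊢
    have hjm : m * j ≤ N := by
      have : j ≤ N / m := by exact_mod_cast hx.2
      calc m * j ≤ m * (N / m) := Nat.mul_le_mul_left _ this
        _ ≤ N := Nat.mul_div_le _ _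
    have hj1 : 1 ≤ j := by omega
    rw [Finset.sum_eq_single (m * j)]
    · rw [if_pos (by push_cast; rfl)]
    · intro b _ hb
      rw [if_neg]
      intro h
      apply hb
      exact_mod_cast h.symm
    · intro h
      exfalso; apply h
      rw [Finset.mem_Icc]
      exact ⟨Nat.mul_pos hm1 hj1, hjm⟩
  · intro x hx hx'
    apply Finset.sum_eq_zero
    intro n hn
    rw [Finset.mem_Icc] at hn
    rw [if_neg]
    intro h
    apply hx'
    have hx1 := norm_pos_of_mem hx
    rw [mem_gball] at hx ⊢
    obtain ⟨j, hj⟩ := Int.eq_ofNat_of_zero_le (show 0 ≤ x.norm by omega)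
    refine ⟨hx.1, ?_⟩
    rw [hj] at h ⊢
    have h' : m * j = n := by exact_mod_cast h
    have : j ≤ N / m := by
      rw [Nat.le_div_iff_mul_le hm1, mul_comm]
      omega
    exact_mod_cast this

lemma second_moment {k : ℤ} (hk : k ≠ 0) : ∃ C : ℝ, 0 ≤ C ∧ ∀ N : ℕ, 1 ≤ N →
    ∑ n ∈ Finset.Icc 1 N, ‖latticeS n k‖ ^ 2 ≤ C * N := by
  by_cases hu : ∀ u : GaussianInt, u.norm = 1 → lam k (u:ℂ) = 1
  · obtain ⟨C, hC, hM⟩ := M_bound (k := 2 * k) (by omega)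
    refine ⟨(gcirc 1).card * (C * 81), by positivity, fun N hN => ?_⟩
    have h1 : ∑ n ∈ Finset.Icc 1 N, ‖latticeS n k‖ ^ 2 ≤ ∑ n ∈ Finset.Icc 1 N, (gcirc 1).card * (gV n (2*k)).re := by
      apply Finset.sum_le_sum
      intro n hn
      rw [Finset.mem_Icc] at hn
      exact S_sq_le hn.1 k hu
    refine h1.trans ?_
    rw [← Finset.mul_sum, ← Complex.re_sum, mul_assoc]
    gcongr
    refine (Complex.re_le_norm _).trans ?_
    rw [sum_gV]
    refine (norm_sum_le _ _).trans ?_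
    set q := √(√(N:ℝ)) with hq
    have hq4 : q ^ 4 = N := by
      rw [show q ^ 4 = (q ^ 2) ^ 2 by ring, Real.sq_sqrt (Real.sqrt_nonneg _), Real.sq_sqrt (by positivity)]
    have hq0 : 0 ≤ q := Real.sqrt_nonneg _
    have h2 : ∀ c ∈ gball N, ‖∑ x ∈ gball (N / c.norm.toNat), lam (2*k) (x:ℂ)‖ ≤ C * q^3 * (1 / (√(√(c.norm : ℝ))) ^ 3) := by
      intro c hc
      have hc1 := norm_pos_of_mem hc
      rw [mem_gball] at hc
      obtain ⟨m, hm⟩ := Int.eq_ofNat_of_zero_le (show 0 ≤ c.norm by omega)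
      rw [hm] at hc hc1 ⊢
      rw [Int.toNat_natCast]
      have hm1 : 1 ≤ m := by omega
      have hmN : m ≤ N := by exact_mod_cast hc.2
      refine (hM (N / m) (Nat.div_pos hmN hm1)).trans ?_
      rw [mul_assoc]
      gcongr
      rw [mul_one_div, ← div_pow]
      gcongr
      rw [hq, ← Real.sqrt_div (Real.sqrt_nonneg _), ← Real.sqrt_div (by positivity), Int.cast_natCast]
      gcongr
      exact Nat.cast_div_le
    refine (Finset.sum_le_sum h2).trans ?_
    rw [← Finset.mul_sum]
    have h3 := sum_inv_norm hN
    calc C * q^3 * ∑ c ∈ gball N, 1 / (√(√(c.norm : ℝ))) ^ 3 ≤ C * q^3 * (81 * q) := by gcongr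
      _ = C * 81 * q^4 := by ring
      _ = _ := by rw [hq4]
  · push Not at hu
    obtain ⟨u, hu1, hu2⟩ := hu
    refine ⟨0, le_rfl, fun N hN => ?_⟩
    rw [zero_mul]
    apply le_of_eq
    apply Finset.sum_eq_zero
    intro n hn
    rw [Finset.mem_Icc] at hn
    rw [S_eq_zero hn.1 k hu1 hu2]
    simp

lemma first_moment {k : ℤ} (hk : k ≠ 0) (ε : ℝ) (hε : 0 < ε) : ∃ N₀ : ℕ, ∀ N : ℕ, N₀ ≤ N →
    ∑ n ∈ Finset.Icc 1 N, ‖latticeS n k‖ ≤ ε * N := by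
  classical
  obtain ⟨C, hC, hM⟩ := second_moment hk
  obtain ⟨N₀, hD⟩ := density_zero (ε ^ 2 / (C + 1)) (by positivity)
  refine ⟨max 1 N₀, fun N hN => ?_⟩
  have hN1 : 1 ≤ N := le_trans (le_max_left _ _) hN
  have hN2 := hD N (le_trans (le_max_right _ _) hN)
  set T := (Finset.Icc 1 N).filter (fun n => ∃ x y : ℕ, n = x^2+y^2) with hT
  have hTc : (T.card : ℝ) ≤ ε ^ 2 / (C + 1) * N := by convert hN2
  have h1 : ∑ n ∈ Finset.Icc 1 N, ‖latticeS n k‖ = ∑ n ∈ T, ‖latticeS n k‖ := by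
    symm
    apply Finset.sum_subset (Finset.filter_subset _ _)
    intro n hn hnT
    rw [Finset.mem_filter] at hnT
    have hemp : latticeCircle n = ∅ := by
      rw [Finset.eq_empty_iff_forall_notMem]
      intro p hp
      rw [mem_latticeCircle] at hp
      apply hnT
      refine ⟨hn, p.1.natAbs, p.2.natAbs, ?_⟩
      zify
      rw [sq_abs, sq_abs]
      exact hp.symm
    unfold latticeS
    rw [hemp]
    simp
  rw [h1]
  have h2 : (∑ n ∈ T, ‖latticeS n k‖) ^ 2 ≤ T.card * ∑ n ∈ T, ‖latticeS n k‖ ^ 2 := sq_sum_le_card_mul_sum_sq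
  have h3 : ∑ n ∈ T, ‖latticeS n k‖ ^ 2 ≤ C * N :=
    (Finset.sum_le_sum_of_subset_of_nonneg (Finset.filter_subset _ _) (fun _ _ _ => by positivity)).trans (hM N hN1)
  have h4 : (∑ n ∈ T, ‖latticeS n k‖) ^ 2 ≤ (ε * N) ^ 2 := by
    refine h2.trans ?_
    calc (T.card : ℝ) * ∑ n ∈ T, ‖latticeS n k‖ ^ 2 ≤ (ε ^ 2 / (C + 1) * N) * (C * N) := by gcongr
      _ = (ε * N) ^ 2 * (C / (C+1)) := by field_simp
      _ ≤ (ε * N) ^ 2 * 1 := by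
        gcongr
        rw [div_le_one (by linarith)]; linarith
      _ = _ := mul_one _
  exact le_of_sq_le_sq h4 (by positivity)

/-! ### Fourier expansion -/

lemma deriv_periodic {f : ℝ → ℝ} {T : ℝ} (hf : Function.Periodic f T) : Function.Periodic (deriv f) T := by
  intro x
  rw [← deriv_comp_add_const]
  congr 1
  funext y
  exact hf y

lemma fourier_expansion (f : ℝ → ℝ) (hf : ContDiff ℝ 2 f) (hper : Function.Periodic f (2 * Real.pi)) (C : ℝ)
    (hC : ∀ θ, |deriv (deriv f) θ| ≤ C) :
    ∃ c : ℤ → ℂ, c 0 = (((1 / (2 * Real.pi)) * ∫ θ in (-Real.pi)..Real.pi, f θ : ℝ) : ℂ) ∧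
      (∀ k : ℤ, k ≠ 0 → ‖c k‖ ≤ C / (k:ℝ)^2) ∧
      ∀ θ : ℝ, HasSum (fun k : ℤ => c k * Complex.exp ((k:ℂ) * θ * Complex.I)) (f θ : ℂ) := by
  have hpi := Real.pi_pos
  have hab : -Real.pi < Real.pi := by linarith
  have hT : Fact (0 < Real.pi - -Real.pi) := ⟨by linarith⟩
  have h2pi : Real.pi - -Real.pi = 2 * Real.pi := by ring
  have hd1 : Differentiable ℝ f := hf.differentiable (by norm_num)
  have hf1 : ContDiff ℝ 1 (deriv f) := (contDiff_succ_iff_deriv (n := 1).mp hf).2.2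
  have hd2 : Differentiable ℝ (deriv f) := hf1.differentiable (by norm_num)
  have hc2 : Continuous (deriv (deriv f)) := hf1.continuous_deriv (by norm_num)
  set F0 : ℝ → ℂ := fun θ => (f θ : ℂ) with hF0
  set F1 : ℝ → ℂ := fun θ => ((deriv f θ : ℝ) : ℂ) with hF1
  set F2 : ℝ → ℂ := fun θ => ((deriv (deriv f) θ : ℝ) : ℂ) with hF2
  have hD1 : ∀ x, HasDerivAt F0 (F1 x) x := fun x => (hd1 x).hasDerivAt.ofReal_comp
  have hD2 : ∀ x, HasDerivAt F1 (F2 x) x := fun x => (hd2 x).hasDerivAt.ofReal_comp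
  have hcF0 : Continuous F0 := Complex.continuous_ofReal.comp hf.continuous
  have hcF1 : Continuous F1 := Complex.continuous_ofReal.comp hf1.continuous
  have hcF2 : Continuous F2 := Complex.continuous_ofReal.comp hc2
  have hp0 : Function.Periodic F0 (Real.pi - -Real.pi) := by
    intro x; simp only [hF0]; rw [h2pi, hper x]
  have e0 : F0 Real.pi = F0 (-Real.pi) := by
    have := hp0 (-Real.pi); rw [← this]; congr 1; ring
  have e1 : F1 Real.pi = F1 (-Real.pi) := by
    have := deriv_periodic hper (-Real.pi)
    simp only [hF1]
    rw [← this]; congr 2; ring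
  set c : ℤ → ℂ := fourierCoeffOn hab F0 with hc
  have hC0 : 0 ≤ C := (abs_nonneg _).trans (hC 0)
  have hb2 : ∀ k, ‖fourierCoeffOn hab F2 k‖ ≤ C := by
    intro k
    rw [fourierCoeffOn_eq_integral, norm_smul]
    have h1 : ‖∫ x in (-Real.pi)..Real.pi, fourier (-k) (x : AddCircle (Real.pi - -Real.pi)) • F2 x‖ ≤ C * |Real.pi - -Real.pi| := by
      apply intervalIntegral.norm_integral_le_of_norm_le_const
      intro x _
      rw [norm_smul, fourier_apply, Circle.norm_coe, one_mul]
      simp only [hF2, Complex.norm_real]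
      exact hC x
    rw [abs_of_pos hT.out] at h1
    rw [Real.norm_eq_abs, abs_of_pos (by have := hT.out; positivity)]
    rw [one_div, inv_mul_le_iff₀ hT.out]
    linarith
  have hcb : ∀ k : ℤ, k ≠ 0 → ‖c k‖ ≤ C / (k:ℝ)^2 := by
    intro k hk
    have hk' : (k:ℂ) ≠ 0 := by exact_mod_cast hk
    have q1 := fourierCoeffOn_of_hasDerivAt hab hk (fun x _ => hD1 x) (hcF1.intervalIntegrable _ _)
    have q2 := fourierCoeffOn_of_hasDerivAt hab hk (fun x _ => hD2 x) (hcF2.intervalIntegrable _ _)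
    rw [e0, sub_self, mul_zero, zero_sub] at q1
    rw [e1, sub_self, mul_zero, zero_sub] at q2
    have hpc : (Real.pi : ℂ) ≠ 0 := by exact_mod_cast hpi.ne'
    have q3 : c k = - (fourierCoeffOn hab F2 k) / (k:ℂ)^2 := by
      rw [hc, q1, q2, Complex.ofReal_neg]
      field_simp
      ring_nf
      simp only [Complex.I_sq]
      try ring
    rw [q3, norm_div, norm_neg, norm_pow, Complex.norm_intCast, sq_abs]
    gcongr
    exact hb2 k
  have hsum : Summable c := by
    have hs : Summable (fun k : ℤ => C / (k:ℝ)^2) := by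
      have := (Real.summable_one_div_int_pow (p := 2)).mpr (by norm_num)
      have h2 := this.mul_left C
      simp only [mul_one_div] at h2
      exact h2
    refine Summable.of_norm_bounded_eventually hs ?_
    rw [Filter.eventually_cofinite]
    refine (Set.finite_singleton (0:ℤ)).subset ?_
    intro k hk
    by_contra h0
    exact hk (hcb k h0)
  refine ⟨c, ?_, hcb, ?_⟩
  · rw [hc, fourierCoeffOn_eq_integral]
    simp only [neg_zero, fourier_zero, one_smul, hF0]
    rw [intervalIntegral.integral_ofReal, h2pi, Complex.real_smul]
    push_cast
    rfl
  · intro θ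
    have hlc : Continuous (hp0.lift : AddCircle (Real.pi - -Real.pi) → ℂ) := by
      exact continuous_coinduced_dom.mpr hcF0
    set G : C(AddCircle (Real.pi - -Real.pi), ℂ) := ⟨hp0.lift, hlc⟩ with hG
    have hcoef : fourierCoeff G = c := by
      funext k
      rw [hc, fourierCoeffOn_eq_integral, fourierCoeff_eq_intervalIntegral _ _ (-Real.pi)]
      rw [show -Real.pi + (Real.pi - -Real.pi) = Real.pi by ring]
      rfl
    have := has_pointwise_sum_fourier_series_of_summable (f := G) (by rw [hcoef]; exact hsum) (θ : AddCircle (Real.pi - -Real.pi))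
    rw [hcoef] at this
    have hGθ : G (θ : AddCircle (Real.pi - -Real.pi)) = (f θ : ℂ) := rfl
    rw [hGθ] at this
    have ek : (fun k : ℤ => c k * Complex.exp ((k:ℂ) * θ * Complex.I))
        = fun k => c k • fourier k (θ : AddCircle (Real.pi - -Real.pi)) := by
      funext k
      rw [fourier_coe_apply, h2pi, smul_eq_mul]
      congr 2
      have hpc : (Real.pi : ℂ) ≠ 0 := by exact_mod_cast hpi.ne'
      push_cast
      field_simp
    rw [ek]
    exact this

lemma latticeS_norm_le (n : ℕ) (k : ℤ) : ‖latticeS n k‖ ≤ latticeR n := by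
  unfold latticeS latticeR
  refine (norm_sum_le _ _).trans ?_
  rw [Finset.card_eq_sum_ones]
  push_cast
  apply Finset.sum_le_sum
  intro u _
  rw [show (k : ℂ) * (latticeTheta u : ℂ) * Complex.I = ((k * latticeTheta u : ℝ) : ℂ) * Complex.I by push_cast; ring,
    Complex.norm_exp_ofReal_mul_I]

lemma latticeR_eq {n : ℕ} (hn : 0 < n) : latticeR n = (gcirc n).card := by
  unfold latticeR
  rw [Finset.card_eq_sum_ones, sum_latticeCircle hn, Finset.card_eq_sum_ones]

lemma card_gball {N : ℕ} (hN : 1 ≤ N) : ((gball N).card : ℝ) ≤ 9 * N := by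
  set L := Nat.sqrt N with hL
  have hL1 : 1 ≤ L := by rw [hL, Nat.le_sqrt]; simpa using hN
  have h1 : (gball N).card ≤ (Finset.Icc (-(L:ℤ)) L ×ˢ Finset.Icc (-(L:ℤ)) L).card := by
    apply Finset.card_le_card_of_injOn (fun c : GaussianInt => (c.re, c.im))
    · intro c hc
      have hc := mem_gball.mp (Finset.mem_coe.mp hc)
      have hn : c.norm = c.re ^ 2 + c.im ^ 2 := by rw [Zsqrtd.norm_def]; ring
      have aux : ∀ a : ℤ, a ^ 2 ≤ N → -(L:ℤ) ≤ a ∧ a ≤ L := by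
        intro a ha
        have : a.natAbs ≤ L := by
          rw [hL, Nat.le_sqrt']
          zify
          rw [sq_abs]
          exact ha
        omega
      simp only [Finset.coe_product, Finset.coe_Icc, Set.mem_prod, Set.mem_Icc]
      exact ⟨aux _ (by nlinarith [hc.2, sq_nonneg c.im]), aux _ (by nlinarith [hc.2, sq_nonneg c.re])⟩
    · intro c _ d _ h
      simp only [Prod.mk.injEq] at h
      exact Zsqrtd.ext h.1 h.2
  have h2 : (Finset.Icc (-(L:ℤ)) L ×ˢ Finset.Icc (-(L:ℤ)) L).card = (2 * L + 1) ^ 2 := by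
    rw [Finset.card_product, Int.card_Icc, sq]
    congr 1 <;> omega
  rw [h2] at h1
  have h3 : L ^ 2 ≤ N := by rw [hL, sq]; exact Nat.sqrt_le N
  have h4 : (gball N).card ≤ 9 * N := by nlinarith
  exact_mod_cast h4

lemma sum_gball {E : Type*} [AddCommMonoid E] (N : ℕ) (f : GaussianInt → E) :
    ∑ z ∈ gball N, f z = ∑ n ∈ Finset.Icc 1 N, ∑ z ∈ gcirc n, f z := by
  rw [← Finset.sum_fiberwise_of_maps_to (s := gball N) (t := Finset.Icc 1 N) (g := fun z => z.norm.toNat)]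
  · apply Finset.sum_congr rfl
    intro n hn
    rw [Finset.mem_Icc] at hn
    apply Finset.sum_congr _ (fun _ _ => rfl)
    ext z
    rw [Finset.mem_filter, mem_gcirc (by omega), mem_gball]
    constructor
    · rintro ⟨⟨h0, h1⟩, h2⟩
      have := GaussianInt.norm_nonneg z
      omega
    · intro h
      refine ⟨⟨?_, by omega⟩, by omega⟩
      rintro rfl
      simp at h
      omega
  · intro z hz
    have h1 := norm_pos_of_mem hz
    rw [mem_gball] at hz
    rw [Finset.mem_Icc]
    omega

lemma sum_R {N : ℕ} (hN : 1 ≤ N) : ∑ n ∈ Finset.Icc 1 N, (latticeR n : ℝ) ≤ 9 * N := by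
  refine le_trans (le_of_eq ?_) (card_gball hN)
  rw [Finset.card_eq_sum_ones, sum_gball]
  push_cast
  apply Finset.sum_congr rfl
  intro n hn
  rw [Finset.mem_Icc] at hn
  rw [latticeR_eq (by omega)]
  simp

/-- bound for the Fourier coefficients -/
noncomputable def bk (k : ℤ) : ℝ := if k = 0 then 0 else 1 / (k:ℝ)^2

lemma bk_nonneg (k : ℤ) : 0 ≤ bk k := by
  unfold bk; split_ifs <;> positivity

lemma summable_bk : Summable bk := by
  have := (Real.summable_one_div_int_pow (p := 2)).mpr (by norm_num)
  refine Summable.of_nonneg_of_le bk_nonneg (fun k => ?_) this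
  unfold bk; split_ifs
  · positivity
  · exact le_rfl

/-- normalised first moment -/
noncomputable def EN (N : ℕ) : ℝ := ∑' k : ℤ, bk k * ((∑ n ∈ Finset.Icc 1 N, ‖latticeS n k‖) / N)

lemma EN_tendsto : Filter.Tendsto EN Filter.atTop (nhds 0) := by
  have h0 : (0:ℝ) = ∑' k : ℤ, (0:ℝ) := by simp
  rw [h0]
  apply tendsto_tsum_of_dominated_convergence (bound := fun k => bk k * 9)
  · exact summable_bk.mul_right 9
  · intro k
    by_cases hk : k = 0
    · simp [bk, hk]
    · have : Filter.Tendsto (fun N : ℕ => (∑ n ∈ Finset.Icc 1 N, ‖latticeS n k‖) / N) Filter.atTop (nhds 0) := by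
        rw [Metric.tendsto_atTop]
        intro ε hε
        obtain ⟨N₀, hN⟩ := first_moment hk (ε/2) (by positivity)
        refine ⟨max 1 N₀, fun N hN' => ?_⟩
        have h1 : 1 ≤ N := le_trans (le_max_left _ _) hN'
        have h1' : (0:ℝ) < N := by exact_mod_cast h1
        have h2 := hN N (le_trans (le_max_right _ _) hN')
        have h3 : 0 ≤ ∑ n ∈ Finset.Icc 1 N, ‖latticeS n k‖ := Finset.sum_nonneg (fun _ _ => norm_nonneg _)
        rw [Real.dist_eq, sub_zero, abs_of_nonneg (by positivity), div_lt_iff₀ h1']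
        nlinarith
      simpa using this.const_mul (bk k)
  · filter_upwards [Filter.eventually_ge_atTop 1] with N hN k
    have h1' : (0:ℝ) < N := by exact_mod_cast hN
    have h3 : 0 ≤ ∑ n ∈ Finset.Icc 1 N, ‖latticeS n k‖ := Finset.sum_nonneg (fun _ _ => norm_nonneg _)
    have h4 := bk_nonneg k
    rw [Real.norm_eq_abs, abs_of_nonneg (by positivity)]
    gcongr
    rw [div_le_iff₀ h1']
    exact (Finset.sum_le_sum (fun n _ => latticeS_norm_le n k)).trans (sum_R hN)

lemma summable_bk_S (n : ℕ) : Summable (fun k => bk k * ‖latticeS n k‖) := by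
  refine Summable.of_nonneg_of_le (fun k => mul_nonneg (bk_nonneg k) (norm_nonneg _)) (fun k => ?_)
    (summable_bk.mul_right (latticeR n : ℝ))
  have := bk_nonneg k
  have := latticeS_norm_le n k
  gcongr

lemma EN_eq {N : ℕ} (hN : 1 ≤ N) : N * EN N = ∑ n ∈ Finset.Icc 1 N, ∑' k : ℤ, bk k * ‖latticeS n k‖ := by
  have h1' : (N:ℝ) ≠ 0 := by positivity
  rw [← Summable.tsum_finsetSum (fun n _ => summable_bk_S n), EN, ← tsum_mul_left]
  congr 1
  funext k
  rw [← Finset.mul_sum]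
  field_simp

/-- angular average -/
noncomputable def gbar (g : ℝ × ℝ → ℝ → ℝ) (w : ℝ × ℝ) : ℝ := (1 / (2 * Real.pi)) * ∫ θ in (-Real.pi)..Real.pi, g w θ

lemma circle_error (f : ℝ → ℝ) (hf : ContDiff ℝ 2 f) (hper : Function.Periodic f (2 * Real.pi)) (C : ℝ)
    (hC : ∀ θ, |deriv (deriv f) θ| ≤ C) (n : ℕ) (hr : 0 < latticeR n) (θ : ℝ) :
    |(1 / (latticeR n : ℝ)) * ∑ ζ' ∈ latticeCircle n, f (latticeTheta ζ' - θ)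
      - (1 / (2 * Real.pi)) * ∫ θ in (-Real.pi)..Real.pi, f θ|
      ≤ C * (∑' k : ℤ, bk k * ‖latticeS n k‖) / latticeR n := by
  obtain ⟨c, hc0, hcb, hsum⟩ := fourier_expansion f hf hper C hC
  have hr' : (0:ℝ) < latticeR n := by exact_mod_cast hr
  have hrc : (latticeR n : ℂ) ≠ 0 := by exact_mod_cast hr.ne'
  have hC0 : 0 ≤ C := (abs_nonneg _).trans (hC 0)
  have h1 : HasSum (fun k : ℤ => c k * (Complex.exp (-(k:ℂ) * θ * Complex.I) * latticeS n k))
      (∑ ζ' ∈ latticeCircle n, (f (latticeTheta ζ' - θ) : ℂ)) := by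
    have := hasSum_sum (s := latticeCircle n) (fun ζ' _ => hsum (latticeTheta ζ' - θ))
    convert this using 2 with k
    rw [latticeS, Finset.mul_sum, Finset.mul_sum]
    apply Finset.sum_congr rfl
    intro u _
    rw [← Complex.exp_add]
    congr 2
    push_cast
    ring
  have hS0 : latticeS n 0 = latticeR n := by
    simp [latticeS, latticeR]
  have h2 : HasSum (fun k : ℤ => if k = 0 then 0 else c k * (Complex.exp (-(k:ℂ) * θ * Complex.I) * latticeS n k))
      (∑ ζ' ∈ latticeCircle n, (f (latticeTheta ζ' - θ) : ℂ) - c 0 * latticeR n) := by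
    have := h1.update 0 0
    have ea : (fun k : ℤ => if k = 0 then 0 else c k * (Complex.exp (-(k:ℂ) * θ * Complex.I) * latticeS n k))
        = Function.update (fun k : ℤ => c k * (Complex.exp (-(k:ℂ) * θ * Complex.I) * latticeS n k)) 0 0 := by
      funext k
      simp [Function.update_apply]
    have eb : ∑ ζ' ∈ latticeCircle n, (f (latticeTheta ζ' - θ) : ℂ) - c 0 * latticeR n
        = 0 - c 0 * (Complex.exp (-((0:ℤ):ℂ) * θ * Complex.I) * latticeS n 0) + ∑ ζ' ∈ latticeCircle n, (f (latticeTheta ζ' - θ) : ℂ) := by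
      rw [hS0]
      simp
      ring
    rw [ea, eb]
    exact this
  have h3 : ‖∑ ζ' ∈ latticeCircle n, (f (latticeTheta ζ' - θ) : ℂ) - c 0 * latticeR n‖
      ≤ ∑' k : ℤ, C * (bk k * ‖latticeS n k‖) := by
    rw [← h2.tsum_eq]
    apply tsum_of_norm_bounded ((summable_bk_S n).mul_left C).hasSum
    intro k
    unfold bk
    split_ifs with hk
    · simp
    · rw [norm_mul, norm_mul, show -(k:ℂ) * (θ:ℂ) * Complex.I = ((-(k:ℝ) * θ : ℝ) : ℂ) * Complex.I by push_cast; ring,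
        Complex.norm_exp_ofReal_mul_I, one_mul, ← mul_assoc]
      have := hcb k hk
      rw [mul_one_div]
      gcongr
  rw [tsum_mul_left] at h3
  rw [le_div_iff₀ hr']
  refine le_trans (le_of_eq ?_) h3
  rw [hc0]
  set I := (1 / (2 * Real.pi)) * ∫ θ in (-Real.pi)..Real.pi, f θ
  have : (∑ ζ' ∈ latticeCircle n, (f (latticeTheta ζ' - θ) : ℂ) - (I:ℂ) * latticeR n)
      = ((∑ ζ' ∈ latticeCircle n, f (latticeTheta ζ' - θ) - I * latticeR n : ℝ) : ℂ) := by push_cast; rfl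
  rw [this, Complex.norm_real, Real.norm_eq_abs]
  nth_rewrite 2 [← abs_of_pos hr']
  rw [← abs_mul]
  congr 1
  field_simp

lemma total_error (g : ℝ × ℝ → ℝ → ℝ)
    (hper : ∀ w, Function.Periodic (g w) (2 * Real.pi))
    (hθ2 : ∀ w, ContDiff ℝ 2 (g w)) (C : ℝ)
    (hθbdd : ∀ w θ, |deriv (deriv (g w)) θ| ≤ C) {N : ℕ} (hN : 1 ≤ N) (w : GaussianInt → ℝ × ℝ) :
    |∑ z ∈ gball N, ((1 / (latticeR z.norm.toNat : ℝ)) *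
        ∑ ζ' ∈ latticeCircle z.norm.toNat, g (w z) (latticeTheta ζ' - latticeTheta (z.re, z.im)))
      - ∑ z ∈ gball N, gbar g (w z)| ≤ C * (N * EN N) := by
  rw [← Finset.sum_sub_distrib, EN_eq hN, Finset.mul_sum, sum_gball]
  refine (Finset.abs_sum_le_sum_abs _ _).trans ?_
  apply Finset.sum_le_sum
  intro n hn
  rw [Finset.mem_Icc] at hn
  refine (Finset.abs_sum_le_sum_abs _ _).trans ?_
  by_cases he : gcirc n = ∅
  · rw [he, Finset.sum_empty]
    have hC0 : 0 ≤ C := (abs_nonneg _).trans (hθbdd 0 0)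
    exact mul_nonneg hC0 (tsum_nonneg (fun k => mul_nonneg (bk_nonneg k) (norm_nonneg _)))
  · have hr : 0 < latticeR n := by
      rw [latticeR_eq (by omega), Finset.card_pos]
      exact Finset.nonempty_iff_ne_empty.mpr he
    have : ∀ z ∈ gcirc n, |((1 / (latticeR z.norm.toNat : ℝ)) *
        ∑ ζ' ∈ latticeCircle z.norm.toNat, g (w z) (latticeTheta ζ' - latticeTheta (z.re, z.im)))
      - gbar g (w z)| ≤ C * (∑' k : ℤ, bk k * ‖latticeS n k‖) / latticeR n := by
      intro z hz
      rw [mem_gcirc (by omega)] at hz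
      rw [hz, Int.toNat_natCast]
      exact circle_error (g (w z)) (hθ2 _) (hper _) C (hθbdd _) n hr _
    refine (Finset.sum_le_sum this).trans ?_
    rw [Finset.sum_const, ← latticeR_eq (by omega), nsmul_eq_mul]
    have hr' : (latticeR n : ℝ) ≠ 0 := by positivity
    apply le_of_eq
    field_simp

lemma Qdisc_eq (g : ℝ × ℝ → ℝ → ℝ) {h R : ℝ} (hh : 0 < h) :
    Qdisc g h R = h ^ 2 * ∑ z ∈ gball ⌊R^2 / h^2⌋₊, ((1 / (latticeR z.norm.toNat : ℝ)) *
        ∑ ζ' ∈ latticeCircle z.norm.toNat, g (h * z.re, h * z.im) (latticeTheta ζ' - latticeTheta (z.re, z.im))) := by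
  classical
  unfold Qdisc
  congr 1
  have hset : {ζ : ℤ × ℤ | ζ ≠ 0 ∧ h ^ 2 * ((ζ.1 : ℝ) ^ 2 + (ζ.2 : ℝ) ^ 2) ≤ R ^ 2}
      = ((gball ⌊R^2 / h^2⌋₊).image (fun z : GaussianInt => (z.re, z.im)) : Set (ℤ × ℤ)) := by
    ext ζ
    rw [Finset.mem_coe, Finset.mem_image, Set.mem_ofPred_eq]
    have key : ∀ z : GaussianInt, (h ^ 2 * ((z.re : ℝ) ^ 2 + (z.im : ℝ) ^ 2) ≤ R ^ 2 ↔ z.norm ≤ (⌊R^2 / h^2⌋₊ : ℕ)) := by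
      intro z
      have hn : z.norm = z.re ^ 2 + z.im ^ 2 := by rw [Zsqrtd.norm_def]; ring
      obtain ⟨m, hm⟩ := Int.eq_ofNat_of_zero_le (GaussianInt.norm_nonneg z)
      have hmr : (z.re : ℝ) ^ 2 + (z.im : ℝ) ^ 2 = m := by
        have := hn.symm.trans hm
        exact_mod_cast this
      rw [hmr, hm, Nat.cast_le, Nat.le_floor_iff (by positivity), le_div_iff₀ (by positivity), mul_comm]
    constructor
    · rintro ⟨h0, h1⟩
      refine ⟨⟨ζ.1, ζ.2⟩, ?_, rfl⟩
      rw [mem_gball]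
      refine ⟨?_, (key ⟨ζ.1, ζ.2⟩).mp h1⟩
      intro hz
      apply h0
      rw [Zsqrtd.ext_iff] at hz
      exact Prod.ext hz.1 hz.2
    · rintro ⟨z, hz, rfl⟩
      rw [mem_gball] at hz
      refine ⟨?_, (key z).mpr hz.2⟩
      intro h0
      apply hz.1
      rw [Prod.ext_iff] at h0
      exact Zsqrtd.ext h0.1 h0.2
  rw [hset, finsum_mem_coe_finset, Finset.sum_image]
  · apply Finset.sum_congr rfl
    intro z _
    have hn : z.re ^ 2 + z.im ^ 2 = z.norm := by rw [Zsqrtd.norm_def]; ring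
    simp only [hn]
  · intro c _ d _ h
    simp only [Prod.mk.injEq] at h
    exact Zsqrtd.ext h.1 h.2

/-! ### Riemann sums and the conclusion -/

lemma joint_continuous (g : ℝ × ℝ → ℝ → ℝ)
    (hw1 : ∀ θ, ContDiff ℝ 1 (fun w => g w θ))
    (hwbdd : ∃ C : ℝ, ∀ w θ, |g w θ| ≤ C ∧ ‖fderiv ℝ (fun w' => g w' θ) w‖ ≤ C)
    (hθ2 : ∀ w, ContDiff ℝ 2 (g w)) : Continuous (fun p : (ℝ × ℝ) × ℝ => g p.1 p.2) := by
  obtain ⟨C, hC⟩ := hwbdd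
  apply continuous_prod_of_continuous_lipschitzWith _ C.toNNReal
  · intro w
    exact (hθ2 w).continuous
  · intro θ
    apply lipschitzWith_of_nnnorm_fderiv_le ((hw1 θ).differentiable (by norm_num))
    intro w
    rw [← NNReal.coe_le_coe, coe_nnnorm]
    exact (hC w θ).2.trans (Real.le_coe_toNNReal C)

lemma gbar_continuous (g : ℝ × ℝ → ℝ → ℝ) (hg : Continuous (fun p : (ℝ × ℝ) × ℝ => g p.1 p.2)) :
    Continuous (gbar g) := by
  unfold gbar
  apply Continuous.mul continuous_const
  exact intervalIntegral.continuous_parametric_intervalIntegral_of_continuous' (f := g) hg _ _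

lemma gbar_bdd (g : ℝ × ℝ → ℝ → ℝ) (C : ℝ) (hC : ∀ w θ, |g w θ| ≤ C) (w : ℝ × ℝ) : |gbar g w| ≤ C := by
  unfold gbar
  have hpi := Real.pi_pos
  have h1 : ‖∫ θ in (-Real.pi)..Real.pi, g w θ‖ ≤ C * |Real.pi - -Real.pi| := by
    apply intervalIntegral.norm_integral_le_of_norm_le_const
    intro x _
    exact hC w x
  rw [show Real.pi - -Real.pi = 2 * Real.pi by ring, abs_of_pos (by positivity), Real.norm_eq_abs] at h1
  rw [abs_mul, abs_of_pos (by positivity), one_div, inv_mul_le_iff₀ (by positivity)]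
  linarith

lemma gbar_integrable (g : ℝ × ℝ → ℝ → ℝ) (hg : Continuous (fun p : (ℝ × ℝ) × ℝ => g p.1 p.2))
    (hint : ∀ θ, MeasureTheory.Integrable (fun w : ℝ × ℝ => |g w θ| * (1 + ‖w‖ ^ 2)))
    (hC0 : ∃ C₀ : ℝ, ∀ θ, (∫ w : ℝ × ℝ, |g w θ| * (1 + ‖w‖ ^ 2)) ≤ C₀) :
    MeasureTheory.Integrable (gbar g) := by
  obtain ⟨C₀, hC⟩ := hC0
  have hpi := Real.pi_pos
  set ν := MeasureTheory.volume.restrict (Set.Ioc (-Real.pi) Real.pi) with hν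
  have hcw : ∀ θ, Continuous (fun w => g w θ) := fun θ => hg.comp (Continuous.prodMk_left θ)
  have hle : ∀ θ w, ‖g w θ‖ ≤ |g w θ| * (1 + ‖w‖ ^ 2) := by
    intro θ w
    rw [Real.norm_eq_abs]
    nlinarith [mul_nonneg (abs_nonneg (g w θ)) (sq_nonneg ‖w‖)]
  have hi : ∀ θ, MeasureTheory.Integrable (fun w => g w θ) := by
    intro θ
    refine (hint θ).mono' (hcw θ).aestronglyMeasurable ?_
    filter_upwards with w
    exact hle θ w
  have hm : MeasureTheory.AEStronglyMeasurable (fun p : (ℝ × ℝ) × ℝ => g p.1 p.2) (MeasureTheory.volume.prod ν) :=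
    hg.aestronglyMeasurable
  have hI : MeasureTheory.Integrable (fun p : (ℝ × ℝ) × ℝ => g p.1 p.2) (MeasureTheory.volume.prod ν) := by
    rw [MeasureTheory.integrable_prod_iff' hm]
    refine ⟨Filter.Eventually.of_forall hi, ?_⟩
    have hfin : MeasureTheory.IsFiniteMeasure ν := by
      rw [hν]; infer_instance
    apply MeasureTheory.Integrable.of_bound (C := C₀)
    · exact hm.norm.prod_swap.integral_prod_right'
    · filter_upwards with θ
      rw [Real.norm_eq_abs, abs_of_nonneg (MeasureTheory.integral_nonneg (fun _ => norm_nonneg _))]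
      exact (MeasureTheory.integral_mono (hi θ).norm (hint θ) (hle θ)).trans (hC θ)
  have := hI.integral_prod_left
  have h2 := this.const_mul (1 / (2 * Real.pi))
  refine h2.congr ?_
  filter_upwards with w
  unfold gbar
  rw [intervalIntegral.integral_of_le (by linarith)]

lemma fl_tendsto (z : ℂ) : Filter.Tendsto (fun h => fl h z) (nhdsWithin 0 (Set.Ioi 0)) (nhds z) := by
  rw [tendsto_iff_norm_sub_tendsto_zero]
  have h1 : Filter.Tendsto (fun h : ℝ => 2 * h) (nhdsWithin 0 (Set.Ioi 0)) (nhds 0) := by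
    have : Filter.Tendsto (fun h : ℝ => 2 * h) (nhds 0) (nhds (2 * 0)) := Filter.tendsto_id.const_mul 2
    rw [mul_zero] at this
    exact this.mono_left nhdsWithin_le_nhds
  refine squeeze_zero' (Filter.Eventually.of_forall (fun _ => norm_nonneg _)) ?_ h1
  filter_upwards [self_mem_nhdsWithin] with h hh
  rw [norm_sub_rev]
  exact fl_dist hh z

lemma mem_gball_iff {h R : ℝ} (hh : 0 < h) (hR : 0 < R) (z : GaussianInt) :
    z ∈ gball ⌊R^2 / h^2⌋₊ ↔ (h:ℂ) * (z:ℂ) ∈ Metric.closedBall (0:ℂ) R \ {0} := by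
  have hn : ‖(h:ℂ) * (z:ℂ)‖ ^ 2 = h ^ 2 * z.norm := by
    rw [norm_mul, mul_pow, normSq_toComplex, Complex.norm_real, Real.norm_eq_abs, sq_abs]
  rw [mem_gball, Set.mem_sdiff, mem_closedBall_zero_iff, Set.mem_singleton_iff, and_comm]
  apply and_congr
  · rw [← sq_le_sq₀ (norm_nonneg _) hR.le, hn]
    obtain ⟨m, hm⟩ := Int.eq_ofNat_of_zero_le (GaussianInt.norm_nonneg z)
    rw [hm, Nat.cast_le, Nat.le_floor_iff (by positivity), le_div_iff₀ (by positivity), mul_comm]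
    simp
  · rw [mul_eq_zero, not_or]
    constructor
    · intro h0
      refine ⟨by exact_mod_cast hh.ne', ?_⟩
      rwa [GaussianInt.toComplex_eq_zero]
    · rintro ⟨-, h0⟩
      rwa [GaussianInt.toComplex_eq_zero] at h0

lemma riemann (G : ℂ → ℝ) (hG : Continuous G) (C : ℝ) (hb : ∀ z, |G z| ≤ C) {R : ℝ} (hR : 0 < R) :
    Filter.Tendsto (fun h : ℝ => h ^ 2 * ∑ z ∈ gball ⌊R^2 / h^2⌋₊, G ((h:ℂ) * (z:ℂ)))
      (nhdsWithin 0 (Set.Ioi 0)) (nhds (∫ z in Metric.closedBall (0:ℂ) R, G z)) := by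
  classical
  set F : ℂ → ℝ := (Metric.closedBall (0:ℂ) R \ {0}).indicator G with hF
  have hC0 : 0 ≤ C := (abs_nonneg _).trans (hb 0)
  have hFb : ∀ z, ‖F z‖ ≤ C := by
    intro z
    by_cases hz : z ∈ Metric.closedBall (0:ℂ) R \ {0}
    · rw [hF, Set.indicator_of_mem hz]; exact hb z
    · rw [hF, Set.indicator_of_notMem hz, norm_zero]; exact hC0
  have hcs : ∀ h : ℝ, 0 < h → MeasureTheory.Integrable (fun z => F (fl h z)) ∧
      ∫ z, F (fl h z) = h ^ 2 * ∑ z ∈ gball ⌊R^2 / h^2⌋₊, G ((h:ℂ) * (z:ℂ)) := by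
    intro h hh
    obtain ⟨a, b⟩ := cell_sum hh F (gball ⌊R^2 / h^2⌋₊) (fun ζ hζ => by
      rw [mem_gball_iff hh hR] at hζ
      rw [hF, Set.indicator_of_notMem hζ])
    refine ⟨a, ?_⟩
    rw [b, smul_eq_mul]
    congr 1
    apply Finset.sum_congr rfl
    intro z hz
    rw [mem_gball_iff hh hR] at hz
    rw [hF, Set.indicator_of_mem hz]
  have hlimI : ∫ z in Metric.closedBall (0:ℂ) R, G z = ∫ z, F z := by
    rw [hF, MeasureTheory.integral_indicator (measurableSet_closedBall.diff (measurableSet_singleton 0))]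
    apply MeasureTheory.setIntegral_congr_set
    exact (MeasureTheory.sdiff_null_ae_eq_self (by simp)).symm
  rw [hlimI]
  have hev : ∀ᶠ h : ℝ in nhdsWithin 0 (Set.Ioi 0), 0 < h ∧ h < 1 := by
    filter_upwards [Ioo_mem_nhdsGT (show (0:ℝ) < 1 by norm_num)] with h hh
    exact hh
  have main : Filter.Tendsto (fun h : ℝ => ∫ z, F (fl h z)) (nhdsWithin 0 (Set.Ioi 0)) (nhds (∫ z, F z)) := by
    apply MeasureTheory.tendsto_integral_filter_of_dominated_convergence
      ((Metric.closedBall (0:ℂ) (R+2)).indicator (fun _ => C))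
    · filter_upwards [hev] with h hh
      exact (hcs h hh.1).1.aestronglyMeasurable
    · filter_upwards [hev] with h hh
      filter_upwards with z
      by_cases hz : z ∈ Metric.closedBall (0:ℂ) (R+2)
      · rw [Set.indicator_of_mem hz]; exact hFb _
      · rw [Set.indicator_of_notMem hz, hF, Set.indicator_of_notMem, norm_zero]
        intro hz'
        apply hz
        rw [Set.mem_sdiff, mem_closedBall_zero_iff] at hz'
        rw [mem_closedBall_zero_iff]
        have h1 := fl_dist hh.1 z
        have h2 := norm_sub_norm_le z (fl h z)
        linarith [hz'.1, hh.2]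
    · exact (integral_ball_const (show 0 ≤ R + 2 by linarith) C).1
    · have hs : ∀ᵐ z : ℂ, z ∉ Metric.sphere (0:ℂ) R :=
        MeasureTheory.measure_eq_zero_iff_ae_notMem.mp (MeasureTheory.Measure.addHaar_sphere _ _ _)
      have h0 : ∀ᵐ z : ℂ, z ∉ ({0} : Set ℂ) :=
        MeasureTheory.measure_eq_zero_iff_ae_notMem.mp (by simp)
      filter_upwards [hs, h0] with z hz hz0
      rw [mem_sphere_zero_iff_norm] at hz
      rw [Set.mem_singleton_iff] at hz0
      have hcont : ContinuousAt F z := by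
        rcases lt_or_gt_of_ne hz with hlt | hgt
        · apply hG.continuousAt.congr
          have o1 : ∀ᶠ y in nhds z, ‖y‖ < R := (continuous_norm.tendsto z).eventually_lt_const hlt
          have o2 : ∀ᶠ y in nhds z, y ≠ 0 := eventually_ne_nhds hz0
          filter_upwards [o1, o2] with y hy1 hy2
          rw [hF, Set.indicator_of_mem]
          rw [Set.mem_sdiff, mem_closedBall_zero_iff]
          exact ⟨hy1.le, hy2⟩
        · apply (continuousAt_const (y := (0:ℝ))).congr
          have o1 : ∀ᶠ y in nhds z, R < ‖y‖ := (continuous_norm.tendsto z).eventually_const_lt hgt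
          filter_upwards [o1] with y hy1
          rw [hF, Set.indicator_of_notMem]
          rw [Set.mem_sdiff, mem_closedBall_zero_iff]
          intro hy
          linarith [hy.1]
      exact hcont.tendsto.comp (fl_tendsto z)
  refine main.congr' ?_
  filter_upwards [hev] with h hh
  exact (hcs h hh.1).2

lemma floor_tendsto {R : ℝ} (hR : 0 < R) :
    Filter.Tendsto (fun h : ℝ => ⌊R^2 / h^2⌋₊) (nhdsWithin 0 (Set.Ioi 0)) Filter.atTop := by
  apply tendsto_nat_floor_atTop.comp
  have h1 : Filter.Tendsto (fun h : ℝ => (h⁻¹) ^ 2) (nhdsWithin 0 (Set.Ioi 0)) Filter.atTop :=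
    (Filter.tendsto_pow_atTop (by norm_num)).comp tendsto_inv_nhdsGT_zero
  have h2 := h1.const_mul_atTop (show 0 < R^2 by positivity)
  refine h2.congr (fun h => ?_)
  rw [inv_pow, div_eq_mul_inv]

lemma fixed_R (g : ℝ × ℝ → ℝ → ℝ)
    (hper : ∀ w, Function.Periodic (g w) (2 * Real.pi))
    (hw1 : ∀ θ, ContDiff ℝ 1 (fun w => g w θ))
    (hwbdd : ∃ C : ℝ, ∀ w θ, |g w θ| ≤ C ∧ ‖fderiv ℝ (fun w' => g w' θ) w‖ ≤ C)
    (hθ2 : ∀ w, ContDiff ℝ 2 (g w))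
    (hθbdd : ∃ C : ℝ, ∀ w θ, |deriv (deriv (g w)) θ| ≤ C) {R : ℝ} (hR : 0 < R) :
    Filter.Tendsto (fun h : ℝ => Qdisc g h R) (nhdsWithin 0 (Set.Ioi 0))
      (nhds (∫ z in Metric.closedBall (0:ℂ) R, gbar g (z.re, z.im))) := by
  have hg := joint_continuous g hw1 hwbdd hθ2
  obtain ⟨C, hC⟩ := hwbdd
  obtain ⟨C2, hC2⟩ := hθbdd
  have hC20 : 0 ≤ C2 := (abs_nonneg _).trans (hC2 0 0)
  have hr := riemann (fun z => gbar g (z.re, z.im))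
    ((gbar_continuous g hg).comp (Complex.continuous_re.prodMk Complex.continuous_im)) C
    (fun z => gbar_bdd g C (fun w θ => (hC w θ).1) _) hR
  have hN := floor_tendsto hR
  have hE : Filter.Tendsto (fun h : ℝ => C2 * (R^2 * |EN ⌊R^2 / h^2⌋₊|)) (nhdsWithin 0 (Set.Ioi 0)) (nhds 0) := by
    have := ((EN_tendsto.comp hN).abs.const_mul (R^2)).const_mul C2
    simpa using this
  have hdiff : Filter.Tendsto (fun h : ℝ => Qdisc g h R - h ^ 2 * ∑ z ∈ gball ⌊R^2 / h^2⌋₊,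
      (fun z : ℂ => gbar g (z.re, z.im)) ((h:ℂ) * (z:ℂ))) (nhdsWithin 0 (Set.Ioi 0)) (nhds 0) := by
    refine squeeze_zero_norm' ?_ hE
    filter_upwards [self_mem_nhdsWithin, hN.eventually_ge_atTop 1] with h hh hN1
    have hh : 0 < h := hh
    have te := total_error g hper hθ2 C2 hC2 hN1 (fun z => (h * z.re, h * z.im))
    have ez : ∀ z : GaussianInt, (fun z : ℂ => gbar g (z.re, z.im)) ((h:ℂ) * (z:ℂ)) = gbar g (h * z.re, h * z.im) := by
      intro z
      have r1 : ((h:ℂ) * (z:ℂ)).re = h * z.re := by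
        rw [Complex.re_ofReal_mul, GaussianInt.toComplex_def]
        simp
      have r2 : ((h:ℂ) * (z:ℂ)).im = h * z.im := by
        rw [Complex.im_ofReal_mul, GaussianInt.toComplex_def]
        simp
      change gbar g (((h:ℂ) * (z:ℂ)).re, ((h:ℂ) * (z:ℂ)).im) = _
      rw [r1, r2]
    rw [Qdisc_eq g hh, ← mul_sub, Real.norm_eq_abs, abs_mul, abs_of_pos (by positivity)]
    simp only [ez]
    refine (mul_le_mul_of_nonneg_left te (by positivity)).trans ?_
    have hNle : ((⌊R^2 / h^2⌋₊ : ℕ) : ℝ) ≤ R^2 / h^2 := Nat.floor_le (by positivity)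
    have hNle' : h^2 * ((⌊R^2 / h^2⌋₊ : ℕ) : ℝ) ≤ R^2 := by
      rw [le_div_iff₀ (by positivity)] at hNle
      linarith
    calc h^2 * (C2 * (⌊R^2 / h^2⌋₊ * EN ⌊R^2 / h^2⌋₊))
        ≤ h^2 * (C2 * (⌊R^2 / h^2⌋₊ * |EN ⌊R^2 / h^2⌋₊|)) := by
          gcongr
          exact le_abs_self _
      _ = C2 * ((h^2 * ⌊R^2 / h^2⌋₊) * |EN ⌊R^2 / h^2⌋₊|) := by ring
      _ ≤ C2 * (R^2 * |EN ⌊R^2 / h^2⌋₊|) := by gcongr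
  have := hdiff.add hr
  rw [zero_add] at this
  refine this.congr (fun h => ?_)
  ring

lemma Qcont_eq (g : ℝ × ℝ → ℝ → ℝ) : Qcont g = ∫ z : ℂ, gbar g (z.re, z.im) := by
  have := Complex.volume_preserving_equiv_real_prod.integral_comp
    Complex.measurableEquivRealProd.measurableEmbedding (gbar g)
  exact this.symm

lemma gbarC_integrable (g : ℝ × ℝ → ℝ → ℝ) (h : MeasureTheory.Integrable (gbar g)) :
    MeasureTheory.Integrable (fun z : ℂ => gbar g (z.re, z.im)) :=
  (Complex.volume_preserving_equiv_real_prod.integrable_comp_emb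
    Complex.measurableEquivRealProd.measurableEmbedding).mpr h

lemma diagonal_choice (q : ℝ → ℝ → ℝ) (Q : ℝ) (I : ℝ → ℝ)
    (h1 : ∀ R, 0 < R → Filter.Tendsto (fun h => q h R) (nhdsWithin 0 (Set.Ioi 0)) (nhds (I R)))
    (h2 : Filter.Tendsto I Filter.atTop (nhds Q)) :
    ∃ R : ℝ → ℝ, (∀ h : ℝ, 0 < h → 0 < R h) ∧
      Filter.Tendsto (fun h : ℝ => q h (R h)) (nhdsWithin 0 (Set.Ioi 0)) (nhds Q) := by
  have hch : ∀ h : ℝ, ∃ r : ℝ, 0 < h → 0 < r ∧ |q h r - Q| < sInf ((fun r => |q h r - Q|) '' Set.Ioi 0) + h := by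
    intro h
    by_cases hh : 0 < h
    · obtain ⟨a, ⟨r, hr, rfl⟩, ha⟩ := Real.lt_sInf_add_pos
        (s := (fun r => |q h r - Q|) '' Set.Ioi 0) ⟨_, ⟨1, by simp, rfl⟩⟩ hh
      exact ⟨r, fun _ => ⟨hr, ha⟩⟩
    · exact ⟨0, fun h' => absurd h' hh⟩
  choose R hRc using hch
  refine ⟨R, fun h hh => (hRc h hh).1, ?_⟩
  rw [Metric.tendsto_nhds]
  intro ε hε
  obtain ⟨r, hr0, hr⟩ : ∃ r : ℝ, 0 < r ∧ |I r - Q| < ε / 3 := by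
    have := (Metric.tendsto_nhds.mp h2 (ε/3) (by positivity)).and (Filter.eventually_gt_atTop 0)
    obtain ⟨r, hr⟩ := this.exists
    exact ⟨r, hr.2, hr.1⟩
  have e1 := Metric.tendsto_nhds.mp (h1 r hr0) (ε/3) (by positivity)
  filter_upwards [e1, Ioo_mem_nhdsGT (show 0 < ε/3 by positivity)] with h ha hb
  rw [Real.dist_eq] at ha ⊢
  have h3 := (hRc h hb.1).2
  have h4 : sInf ((fun r => |q h r - Q|) '' Set.Ioi 0) ≤ |q h r - Q| := by
    apply csInf_le
    · refine ⟨0, ?_⟩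
      rintro x ⟨y, _, rfl⟩
      exact abs_nonneg _
    · exact ⟨r, hr0, rfl⟩
  have h5 : |q h r - Q| ≤ |q h r - I r| + |I r - Q| := abs_sub_le _ _ _
  linarith [hb.2]

/-- Consistency: there is a truncation radius `R(h)` such that the discrete velocity
model `Q^{h,R(h)}` on the lattice `hℤ²` converges to `Q` as `h → 0⁺`. -/
theorem consistency_of_lattice_DVM
    (g : ℝ × ℝ → ℝ → ℝ)
    (hper : ∀ w, Function.Periodic (g w) (2 * Real.pi))
    (hw1 : ∀ θ, ContDiff ℝ 1 (fun w => g w θ))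
    (hwbdd : ∃ C : ℝ, ∀ w θ, |g w θ| ≤ C ∧ ‖fderiv ℝ (fun w' => g w' θ) w‖ ≤ C)
    (hθ2 : ∀ w, ContDiff ℝ 2 (g w))
    (hθbdd : ∃ C : ℝ, ∀ w θ, |deriv (deriv (g w)) θ| ≤ C)
    (hint : ∀ θ, MeasureTheory.Integrable (fun w : ℝ × ℝ => |g w θ| * (1 + ‖w‖ ^ 2)))
    (hC0 : ∃ C₀ : ℝ, ∀ θ, (∫ w : ℝ × ℝ, |g w θ| * (1 + ‖w‖ ^ 2)) ≤ C₀) :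
    ∃ R : ℝ → ℝ, (∀ h : ℝ, 0 < h → 0 < R h) ∧
      Filter.Tendsto (fun h : ℝ => Qdisc g h (R h))
        (nhdsWithin 0 (Set.Ioi 0)) (nhds (Qcont g)) := by

  have hgi := gbar_integrable g (joint_continuous g hw1 hwbdd hθ2) hint hC0
  refine diagonal_choice (Qdisc g) (Qcont g)
    (fun R => ∫ z in Metric.closedBall (0:ℂ) R, gbar g (z.re, z.im))
    (fun R hR => fixed_R g hper hw1 hwbdd hθ2 hθbdd hR) ?_
  rw [Qcont_eq]
  exact (MeasureTheory.aecover_closedBall Filter.tendsto_id).integral_tendsto_of_countably_generated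
    (gbarC_integrable g hgi)
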